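/- Suppose g(r) = o(e^{-c r}) as r → ∞ for some c > 0, and fix γ > 1. Let δ_n denote the minimum vertex degree of G_n(r̂_n(γ)). Then almost surely, lim_{n→∞} δ_n/(log n) = γ·H₋⁻¹(1/γ). -/

import Mathlib

open MeasureTheory ProbabilityTheory Filter Set

noncomputable section

namespace RCM

/-- The toroidal metric on the unit cube. -/
def torusDist {d : ℕ} (x y : EuclideanSpace ℝ (Fin d)) : ℝ :=
  ⨅ z : Fin d → ℤ, ‖x - y - (WithLp.equiv 2 (Fin d → ℝ)).symm (fun i => (z i : ℝ))‖

/-- The half-open unit cube `S = (-1/2, 1/2]^d`. -/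
def cube (d : ℕ) : Set (EuclideanSpace ℝ (Fin d)) :=
  {x | ∀ i, x i ∈ Set.Ioc (-(1/2) : ℝ) (1/2)}

/-- The random connection model: i.i.d. uniform points `X`, coupled Poisson counts `N`,
i.i.d. uniform edge variables `U`, with the three families mutually independent, and a
non-increasing connection function `g : [0,∞) → [0,1]` with finite positive integral `α`. -/
structure Model (d : ℕ) {Ω : Type*} [MeasurableSpace Ω] (P : Measure Ω) where
  g : ℝ → ℝ
  α : ℝ
  X : ℕ → Ω → EuclideanSpace ℝ (Fin d)
  N : ℕ → Ω → ℕ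
  U : ℕ → ℕ → Ω → ℝ
  g_antitone : AntitoneOn g (Set.Ici 0)
  g_mem : ∀ r : ℝ, 0 ≤ r → g r ∈ Set.Icc (0 : ℝ) 1
  g_integrable : MeasureTheory.Integrable (fun x : EuclideanSpace ℝ (Fin d) => g ‖x‖)
  α_def : α = ∫ x : EuclideanSpace ℝ (Fin d), g ‖x‖
  α_pos : 0 < α
  X_meas : ∀ i, Measurable (X i)
  X_unif : ∀ i : ℕ, 1 ≤ i → Measure.map (X i) P = volume.restrict (cube d)
  X_indep : iIndepFun
    (fun i : {i : ℕ // 1 ≤ i} => X i) P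
  N_meas : ∀ n, Measurable (N n)
  N_mono : ∀ ω, Monotone fun n => N n ω
  N_poisson : ∀ n k : ℕ,
    P {ω | N n ω = k} = ENNReal.ofReal (Real.exp (-(n : ℝ)) * (n : ℝ) ^ k / k.factorial)
  U_meas : ∀ i j, Measurable (U i j)
  U_unif : ∀ i j : ℕ, 1 ≤ i → i < j →
    Measure.map (U i j) P = volume.restrict (Set.Icc (0 : ℝ) 1)
  U_indep : iIndepFun
    (fun p : {p : ℕ × ℕ // 1 ≤ p.1 ∧ p.1 < p.2} => U p.1.1 p.1.2) P
  families_indep : iIndep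
    (![MeasurableSpace.comap (fun ω => fun i : ℕ => X i ω) inferInstance,
       MeasurableSpace.comap (fun ω => fun n : ℕ => N n ω) inferInstance,
       MeasurableSpace.comap (fun ω => fun p : ℕ × ℕ => U p.1 p.2 ω) inferInstance]) P

variable {d : ℕ} {Ω : Type*} [MeasurableSpace Ω] {P : Measure Ω}

/-- Adjacency in the graph `G_n(r)`: vertices `1 ≤ i,j ≤ N_n` are joined iff
`U_{ij} ≤ g(dist(X_i,X_j)/r)`. -/
def adj (M : Model d P) (n : ℕ) (r : ℝ) (ω : Ω) (i j : ℕ) : Prop :=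
  i ≠ j ∧ 1 ≤ i ∧ 1 ≤ j ∧ i ≤ M.N n ω ∧ j ≤ M.N n ω ∧
    M.U (min i j) (max i j) ω ≤ M.g (torusDist (M.X i ω) (M.X j ω) / r)

/-- The degree of vertex `i` in `G_n(r)`. -/
def deg (M : Model d P) (n : ℕ) (r : ℝ) (ω : Ω) (i : ℕ) : ℕ :=
  {j : ℕ | adj M n r ω i j}.ncard

/-- `W_n(r)`, the number of isolated vertices of `G_n(r)`. -/
def isolatedCount (M : Model d P) (n : ℕ) (r : ℝ) (ω : Ω) : ℕ :=
  {i : ℕ | 1 ≤ i ∧ i ≤ M.N n ω ∧ deg M n r ω i = 0}.ncard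


/-- `r̂_n(γ)` defined by `r̂_n(γ)^d = γ log n / (α n)`. -/
def rhat (M : Model d P) (γ : ℝ) (n : ℕ) : ℝ :=
  (γ * Real.log n / (M.α * n)) ^ ((1 : ℝ) / d)

/-- `d_n`, the critical parameter for absence of isolated nodes. -/
def critRadius (M : Model d P) (n : ℕ) (ω : Ω) : ℝ :=
  sInf {r : ℝ | 0 < r ∧ isolatedCount M n r ω = 0}

/-- The maximum vertex degree `Δ_n` of `G_n(r)`. -/
def maxDeg (M : Model d P) (n : ℕ) (r : ℝ) (ω : Ω) : ℕ :=
  (Finset.Icc 1 (M.N n ω)).sup (deg M n r ω)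

/-- The minimum vertex degree `δ_n` of `G_n(r)`. -/
def minDeg (M : Model d P) (n : ℕ) (r : ℝ) (ω : Ω) : ℕ :=
  sInf {k : ℕ | ∃ i, 1 ≤ i ∧ i ≤ M.N n ω ∧ deg M n r ω i = k}

/-- The length (toroidal metric) of the longest edge of `G_n(r)` (`0` if there are no edges). -/
def longestEdge (M : Model d P) (n : ℕ) (r : ℝ) (ω : Ω) : ℝ :=
  sSup ({0} ∪ {t : ℝ | ∃ i j, adj M n r ω i j ∧ t = torusDist (M.X i ω) (M.X j ω)})

/-- Connectivity of `G_n(r)`: any two vertices are joined by a path. -/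
def connectedGraph (M : Model d P) (n : ℕ) (r : ℝ) (ω : Ω) : Prop :=
  ∀ i j : ℕ, 1 ≤ i → i ≤ M.N n ω → 1 ≤ j → j ≤ M.N n ω →
    Relation.ReflTransGen (adj M n r ω) i j

/-- `H(x) = 1 - x + x log x` (with `H(0) = 1`, since `log 0 = 0` in Lean). -/
def H (x : ℝ) : ℝ := 1 - x + x * Real.log x

/-- The inverse of the restriction of `H` to `[1, ∞)`. -/
def Hplusinv (y : ℝ) : ℝ := sInf {x : ℝ | 1 ≤ x ∧ y ≤ H x}

/-- The inverse of the restriction of `H` to `[0, 1]`. -/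
def Hminusinv (y : ℝ) : ℝ := sInf {x : ℝ | 0 ≤ x ∧ H x ≤ y}

/-- The standard normal distribution function. -/
def stdNormalCDF (x : ℝ) : ℝ :=
  ∫ t in Set.Iic x, Real.exp (-t ^ 2 / 2) / Real.sqrt (2 * Real.pi)

/-! Put `x` vertices on the torus, with connection radius such that a vertex is joined to another
one with probability `p ≈ γ log x / x`. A degree is then binomial, so that for `b ∈ (0, 1)` a vertex
has at most `b γ log x` neighbours with probability `x ^ (-γ H b + o(1))`. Among `x` vertices
such a vertex is expected iff `γ H b < 1`, whence the threshold `b = H₋⁻¹ (1 / γ)`. If `γ H b > 1`,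
a union bound shows that there is none. If `γ H b < 1`, the second moment method shows that
there is one: by Markov's inequality for `g`, two vertices at distance at least `2 D r` have
common neighbours so rarely, already for `D` a small power of `x`, that their degrees are nearly
independent, and closer pairs of vertices are too few to matter.

Both bounds fail with a probability polynomially small in `x`, hence almost surely only finitely
often along `x = ρ ^ k`. For the values of `n` between two consecutive terms, `N_n` is compared
with the neighbouring terms (Poisson concentration), and degrees are monotone in the radius and
the vertex set; finally `ρ` tends to `1`. -/

/-! ### The lower tail of the binomial distribution -/

/-- `binomialLowerTail m p s` is the probability that a binomial variable with parameters `m` and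
`p` is smaller than `s`. The inequality is strict, so that an integer is smaller than `⌈t⌉₊` iff it
is smaller than `t`. -/
def binomialLowerTail (m : ℕ) (p : ℝ) (s : ℕ) : ℝ :=
  ∑ k ∈ Finset.range s, m.choose k * p ^ k * (1 - p) ^ (m - k)

section BinomialLowerTail

variable {m s : ℕ} {p : ℝ}

lemma binomialLowerTail_zero_right : binomialLowerTail m p 0 = 0 := by
  simp [binomialLowerTail]

lemma binomialLowerTail_zero_left : binomialLowerTail 0 p (s + 1) = 1 := by
  simp [binomialLowerTail, Finset.sum_range_succ']

lemma binomialLowerTail_succ_succ :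
    binomialLowerTail (m + 1) p (s + 1) =
      (1 - p) * binomialLowerTail m p (s + 1) + p * binomialLowerTail m p s := by
  have pascal (k : ℕ) : ((m + 1).choose (k + 1) : ℝ) * p ^ (k + 1) * (1 - p) ^ (m + 1 - (k + 1)) =
      (1 - p) * (m.choose (k + 1) * p ^ (k + 1) * (1 - p) ^ (m - (k + 1))) +
        p * (m.choose k * p ^ k * (1 - p) ^ (m - k)) := by
    rw [Nat.choose_succ_succ, Nat.add_sub_add_right]
    rcases lt_or_ge k m with hk | hk
    · rw [show m - k = m - (k + 1) + 1 by omega]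
      push_cast
      ring
    · rw [Nat.choose_eq_zero_of_lt (Nat.lt_succ_of_le hk)]
      push_cast
      ring
  simp only [binomialLowerTail]
  rw [Finset.sum_range_succ', Finset.sum_range_succ' _ s, Finset.sum_congr rfl fun k _ => pascal k,
    Finset.sum_add_distrib, ← Finset.mul_sum, ← Finset.mul_sum]
  simp only [Nat.choose_zero_right, Nat.cast_one, pow_zero, Nat.sub_zero]
  ring

lemma binomialLowerTail_nonneg (hp₀ : 0 ≤ p) (hp₁ : p ≤ 1) : 0 ≤ binomialLowerTail m p s :=
  Finset.sum_nonneg fun k _ => by have := sub_nonneg.2 hp₁; positivity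

lemma binomialLowerTail_le_succ_right (hp₀ : 0 ≤ p) (hp₁ : p ≤ 1) :
    binomialLowerTail m p s ≤ binomialLowerTail m p (s + 1) := by
  have := sub_nonneg.2 hp₁
  rw [binomialLowerTail, binomialLowerTail, Finset.sum_range_succ]
  exact le_add_of_nonneg_right (by positivity)

lemma one_sub_mul_binomialLowerTail_le (hp₀ : 0 ≤ p) (hp₁ : p ≤ 1) :
    (1 - p) * binomialLowerTail m p s ≤ binomialLowerTail (m + 1) p s := by
  cases s with
  | zero => simp [binomialLowerTail_zero_right]
  | succ s =>
    rw [binomialLowerTail_succ_succ]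
    exact le_add_of_nonneg_right (mul_nonneg hp₀ (binomialLowerTail_nonneg hp₀ hp₁))

lemma binomialLowerTail_mul_binomialLowerTail_step_le (hp₀ : 0 ≤ p) (hp₁ : p < 1) {e : ℝ}
    (he : 0 ≤ e) (t : ℕ) :
    p * (binomialLowerTail m p s * binomialLowerTail m p (t + 1) +
        binomialLowerTail m p (s + 1) * binomialLowerTail m p t) +
      (1 - 2 * p + e) * (binomialLowerTail m p (s + 1) * binomialLowerTail m p (t + 1)) ≤
    (1 + e / (1 - p) ^ 2) *
      (binomialLowerTail (m + 1) p (s + 1) * binomialLowerTail (m + 1) p (t + 1)) := by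
  have hq : 0 < 1 - p := sub_pos.2 hp₁
  have hF (k u : ℕ) : 0 ≤ binomialLowerTail k p u := binomialLowerTail_nonneg hp₀ hp₁.le
  have excess : e * (binomialLowerTail m p (s + 1) * binomialLowerTail m p (t + 1)) ≤
      e / (1 - p) ^ 2 *
        (binomialLowerTail (m + 1) p (s + 1) * binomialLowerTail (m + 1) p (t + 1)) := calc
    _ = e / (1 - p) ^ 2 * (((1 - p) * binomialLowerTail m p (s + 1)) *
          ((1 - p) * binomialLowerTail m p (t + 1))) := by field_simp
    _ ≤ _ := mul_le_mul_of_nonneg_left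
        (mul_le_mul (one_sub_mul_binomialLowerTail_le hp₀ hp₁.le)
          (one_sub_mul_binomialLowerTail_le hp₀ hp₁.le) (mul_nonneg hq.le (hF _ _)) (hF _ _))
        (by positivity)
  have increments : 0 ≤ p ^ 2 *
      ((binomialLowerTail m p (s + 1) - binomialLowerTail m p s) *
        (binomialLowerTail m p (t + 1) - binomialLowerTail m p t)) :=
    mul_nonneg (sq_nonneg p) (mul_nonneg
      (sub_nonneg.2 (binomialLowerTail_le_succ_right hp₀ hp₁.le))
      (sub_nonneg.2 (binomialLowerTail_le_succ_right hp₀ hp₁.le)))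
  refine le_trans ?_ ((add_le_add_right excess _).trans_eq (one_add_mul _ _).symm)
  rw [binomialLowerTail_succ_succ, binomialLowerTail_succ_succ]
  linarith

lemma sum_range_pow_mul_pow_mul_choose_le_add_pow {x y : ℝ} (hx : 0 ≤ x) (hy : 0 ≤ y) (m s : ℕ) :
    ∑ k ∈ Finset.range s, x ^ k * y ^ (m - k) * m.choose k ≤ (x + y) ^ m := calc
  _ ≤ ∑ k ∈ Finset.range (max s (m + 1)), x ^ k * y ^ (m - k) * m.choose k :=
      Finset.sum_le_sum_of_subset_of_nonneg
        (Finset.range_subset_range.2 (le_max_left _ _)) fun _ _ _ => by positivity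
  _ = ∑ k ∈ Finset.range (m + 1), x ^ k * y ^ (m - k) * m.choose k := by
      refine (Finset.sum_subset (Finset.range_subset_range.2 (le_max_right _ _))
        fun k _ hk => ?_).symm
      rw [Nat.choose_eq_zero_of_lt (by simpa using hk), Nat.cast_zero, mul_zero]
  _ = _ := (add_pow x y m).symm

/-- Markov's inequality for `exp (-θ X)`, with `X` binomial. -/
lemma binomialLowerTail_le_exp (hp₀ : 0 ≤ p) (hp₁ : p ≤ 1) {θ b : ℝ} (hθ : 0 ≤ θ)
    (hs : (s : ℝ) ≤ b + 1) :
    binomialLowerTail m p s ≤ Real.exp (θ * b - m * p * (1 - Real.exp (-θ))) := by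
  have hq := sub_nonneg.2 hp₁
  have tilt : ∀ k ∈ Finset.range s, m.choose k * p ^ k * (1 - p) ^ (m - k) ≤
      Real.exp (θ * b) * ((p * Real.exp (-θ)) ^ k * (1 - p) ^ (m - k) * m.choose k) := by
    intro k hk
    have hkb : (k : ℝ) ≤ b := by
      have : (k : ℝ) + 1 ≤ s := by exact_mod_cast Finset.mem_range.1 hk
      linarith
    calc (m.choose k * p ^ k * (1 - p) ^ (m - k) : ℝ)
        ≤ Real.exp (θ * (b - k)) * (m.choose k * p ^ k * (1 - p) ^ (m - k)) :=
          le_mul_of_one_le_left (by positivity)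
            (Real.one_le_exp (mul_nonneg hθ (sub_nonneg.2 hkb)))
      _ = _ := by
          rw [mul_pow, ← Real.exp_nat_mul, mul_sub, Real.exp_sub, mul_neg, Real.exp_neg,
            mul_comm θ k]
          field_simp
  calc binomialLowerTail m p s
      ≤ ∑ k ∈ Finset.range s,
          Real.exp (θ * b) * ((p * Real.exp (-θ)) ^ k * (1 - p) ^ (m - k) * m.choose k) :=
        Finset.sum_le_sum tilt
    _ ≤ Real.exp (θ * b) * (p * Real.exp (-θ) + (1 - p)) ^ m := by
        rw [← Finset.mul_sum]
        gcongr
        exact sum_range_pow_mul_pow_mul_choose_le_add_pow (by positivity) hq m s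
    _ = Real.exp (θ * b) * (1 - p * (1 - Real.exp (-θ))) ^ m := by ring_nf
    _ ≤ Real.exp (θ * b) * Real.exp (-(p * (1 - Real.exp (-θ)))) ^ m := by
        have : Real.exp (-θ) ≤ 1 := Real.exp_le_one_iff.2 (neg_nonpos.2 hθ)
        gcongr
        · nlinarith [Real.exp_pos (-θ)]
        · exact Real.one_sub_le_exp_neg _
    _ = _ := by
        rw [← Real.exp_nat_mul, ← Real.exp_add]
        ring_nf

lemma log_factorial_le {k : ℕ} (hk : 1 ≤ k) :
    Real.log k.factorial ≤ k * Real.log k - k + 1 + Real.log k := by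
  obtain ⟨j, rfl⟩ := Nat.exists_eq_add_of_le' hk
  have h := Stirling.log_stirlingSeq'_antitone (Nat.zero_le j)
  have hj : ((j + 1 : ℕ) : ℝ) ≠ 0 := by positivity
  have hlog : 0 ≤ Real.log (j + 1 : ℕ) := Real.log_natCast_nonneg _
  simp only [Function.comp_apply, Nat.succ_eq_add_one, Stirling.log_stirlingSeq_formula,
    Real.log_div hj (Real.exp_ne_zero _), Real.log_mul two_ne_zero hj, Real.log_exp] at h
  simp only [zero_add, Nat.factorial_one, Nat.cast_one, Real.log_one, mul_one,
    Real.log_div one_ne_zero (Real.exp_ne_zero _), Real.log_exp] at h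
  linarith

lemma exp_neg_le_one_sub_pow (hp₁ : p < 1) (m : ℕ) :
    Real.exp (-(m * p / (1 - p))) ≤ (1 - p) ^ m := by
  have hq : 0 < 1 - p := sub_pos.2 hp₁
  rw [← Real.exp_log hq, ← Real.exp_nat_mul, Real.exp_le_exp, Real.exp_log hq]
  calc -(m * p / (1 - p)) = m * (1 - (1 - p)⁻¹) := by
        field_simp
        ring
    _ ≤ m * Real.log (1 - p) := by
        gcongr
        exact Real.one_sub_inv_le_log_of_pos hq

lemma exp_le_binomialLowerTail (hp₀ : 0 < p) (hp₁ : p < 1) {k : ℕ} (hk : 1 ≤ k) (hkm : k < m) :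
    Real.exp (k * (1 + Real.log ((m - k) * p / k)) - 1 - Real.log k - m * p / (1 - p)) ≤
      binomialLowerTail m p (k + 1) := by
  have hq : 0 < 1 - p := sub_pos.2 hp₁
  have hk₀ : (0 : ℝ) < k := by exact_mod_cast hk
  have hmk : (0 : ℝ) < m - k := sub_pos.2 (by exact_mod_cast hkm)
  have hchoose : ((m : ℝ) - k) ^ k / k.factorial ≤ m.choose k := by
    refine le_trans ?_ (Nat.pow_le_choose k m)
    gcongr
    rw [Nat.cast_sub (by omega)]
    push_cast
    linarith
  calc _ ≤ Real.exp (k * Real.log ((m - k) * p)) * Real.exp (-Real.log k.factorial) *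
        Real.exp (-(m * p / (1 - p))) := by
        rw [← Real.exp_add, ← Real.exp_add, Real.exp_le_exp,
          Real.log_div (mul_pos hmk hp₀).ne' hk₀.ne']
        linarith [log_factorial_le hk]
    _ = ((m : ℝ) - k) ^ k / k.factorial * p ^ k * Real.exp (-(m * p / (1 - p))) := by
        rw [Real.exp_nat_mul, Real.exp_log (mul_pos hmk hp₀), Real.exp_neg,
          Real.exp_log (by positivity), mul_pow]
        ring
    _ ≤ m.choose k * p ^ k * (1 - p) ^ (m - k) := by
        gcongr
        exact (exp_neg_le_one_sub_pow hp₁ m).trans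
          (pow_le_pow_of_le_one hq.le (by linarith) (Nat.sub_le m k))
    _ ≤ binomialLowerTail m p (k + 1) :=
        Finset.single_le_sum (f := fun k => (m.choose k * p ^ k * (1 - p) ^ (m - k) : ℝ))
          (fun _ _ => by positivity) (Finset.self_mem_range_succ k)

end BinomialLowerTail

/-! ### The rate function -/

lemma continuous_H : Continuous H :=
  (continuous_const.sub continuous_id).add Real.continuous_mul_log

lemma H_one : H 1 = 0 := by simp [H]

lemma strictAntiOn_H : StrictAntiOn H (Set.Icc 0 1) := by
  refine strictAntiOn_of_deriv_neg (convex_Icc 0 1) continuous_H.continuousOn fun x hx => ?_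
  rw [interior_Icc] at hx
  have h : HasDerivAt H (0 - 1 + (Real.log x + 1)) x :=
    ((hasDerivAt_const x 1).sub (hasDerivAt_id x)).add (Real.hasDerivAt_mul_log hx.1.ne')
  rw [h.deriv]
  linarith [Real.log_neg hx.1 hx.2]

lemma bddBelow_setOf_H_le (y : ℝ) : BddBelow {x : ℝ | 0 ≤ x ∧ H x ≤ y} := ⟨0, fun _ hx => hx.1⟩

lemma lt_H_of_lt_Hminusinv {b y : ℝ} (hb : 0 ≤ b) (h : b < Hminusinv y) : y < H b :=
  not_le.1 fun hle => notMem_of_lt_csInf h (bddBelow_setOf_H_le y) ⟨hb, hle⟩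

lemma H_lt_of_Hminusinv_lt {b y : ℝ} (hb : b ≤ 1) (hy : 0 ≤ y) (h : Hminusinv y < b) :
    H b < y := by
  obtain ⟨x, ⟨hx₀, hxy⟩, hxb⟩ := exists_lt_of_csInf_lt
    (s := {x : ℝ | 0 ≤ x ∧ H x ≤ y}) ⟨1, zero_le_one, H_one.trans_le hy⟩ h
  exact (strictAntiOn_H ⟨hx₀, hxb.le.trans hb⟩ ⟨hx₀.trans hxb.le, hb⟩ hxb).trans_le hxy

lemma Hminusinv_nonneg (y : ℝ) : 0 ≤ Hminusinv y := Real.sInf_nonneg fun _ hx => hx.1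

lemma Hminusinv_lt_one {y : ℝ} (hy : 0 < y) : Hminusinv y < 1 := by
  have h := (continuous_H.tendsto 1).eventually_le_const (H_one.trans_lt hy)
  obtain ⟨x, hx, hx₀, hx₁⟩ := ((h.filter_mono (nhdsWithin_le_nhds (s := Set.Iio 1))).and
    (Ioo_mem_nhdsLT zero_lt_one)).exists
  exact (csInf_le (bddBelow_setOf_H_le y) ⟨hx₀.le, hx⟩).trans_lt hx₁

lemma mul_H_div {μ : ℝ} (hμ : μ ≠ 0) (b : ℝ) : μ * H (b / μ) = μ - b + b * Real.log (b / μ) := by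
  rw [H]
  field_simp

/-! ### Large deviations of the binomial distribution -/

section LargeDeviations

variable {ι : Type*} {l : Filter ι} {m : ι → ℕ} {p L : ι → ℝ} {μ b κ : ℝ}

lemma eventually_binomialLowerTail_le (hL : Tendsto L l atTop)
    (hp : Tendsto p l (nhdsWithin 0 (Ioi 0)))
    (hmp : Tendsto (fun i => m i * p i / L i) l (nhds μ)) (hb : 0 < b) (hbμ : b ≤ μ)
    (hκ : κ < μ * H (b / μ)) :
    ∀ᶠ i in l, binomialLowerTail (m i) (p i) ⌈b * L i⌉₊ ≤ Real.exp (-(κ * L i)) := by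
  have hμ : 0 < μ := hb.trans_le hbμ
  have hθ : 0 ≤ Real.log (μ / b) := Real.log_nonneg ((one_le_div hb).2 hbμ)
  have exponent : Tendsto
      (fun i => Real.log (μ / b) * b - m i * p i / L i * (1 - b / μ)) l
      (nhds (-(μ * H (b / μ)))) := by
    convert (hmp.mul_const (1 - b / μ)).const_sub (Real.log (μ / b) * b) using 2
    rw [mul_H_div hμ.ne', ← inv_div μ b, Real.log_inv]
    field_simp
    ring
  filter_upwards [exponent.eventually_lt_const (neg_lt_neg hκ), hL.eventually_gt_atTop 0,
    hp.eventually (Ioo_mem_nhdsGT one_pos)] with i hi hLi hpi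
  refine (binomialLowerTail_le_exp hpi.1.le hpi.2.le hθ
    (Nat.ceil_lt_add_one (by positivity)).le).trans (Real.exp_le_exp.2 ?_)
  rw [Real.exp_neg, Real.exp_log (by positivity), inv_div]
  calc _ = (Real.log (μ / b) * b - m i * p i / L i * (1 - b / μ)) * L i := by field_simp
    _ ≤ -κ * L i := by gcongr
    _ = _ := by ring

lemma tendsto_sub_mul_div {k : ι → ℕ} (hL : Tendsto L l atTop)
    (hp : Tendsto p l (nhds 0)) (hmp : Tendsto (fun i => m i * p i / L i) l (nhds μ))
    (hk : Tendsto (fun i => k i / L i) l (nhds b)) (hb : 0 < b) :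
    Tendsto (fun i => (m i - k i) * p i / k i) l (nhds (μ / b)) := by
  have h := (hmp.div hk hb.ne').sub hp
  rw [sub_zero] at h
  refine h.congr' ?_
  filter_upwards [hL.eventually_gt_atTop 0, hk.eventually_const_lt hb] with i hLi hki
  have hki' : (0 : ℝ) < k i := (div_pos_iff_of_pos_right hLi).1 hki
  simp only [Pi.div_apply]
  field_simp

/-- The exponent is the one in `exp_le_binomialLowerTail`. -/
lemma tendsto_exponent_div {k : ι → ℕ} (hL : Tendsto L l atTop)
    (hp : Tendsto p l (nhds 0)) (hmp : Tendsto (fun i => m i * p i / L i) l (nhds μ))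
    (hk : Tendsto (fun i => k i / L i) l (nhds b)) (hb : 0 < b) (hμ : 0 < μ) :
    Tendsto (fun i => (k i * (1 + Real.log ((m i - k i) * p i / k i)) - 1 - Real.log (k i) -
      m i * p i / (1 - p i)) / L i) l (nhds (-(μ * H (b / μ)))) := by
  have hk_atTop : Tendsto (fun i => (k i : ℝ)) l atTop := by
    refine (hk.pos_mul_atTop hb hL).congr' ?_
    filter_upwards [hL.eventually_gt_atTop 0] with i hi using div_mul_cancel₀ _ hi.ne'
  have hlog : Tendsto (fun i => Real.log (k i) / L i) l (nhds 0) := by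
    have h := (Real.isLittleO_log_id_atTop.tendsto_div_nhds_zero.comp hk_atTop).mul hk
    rw [zero_mul] at h
    refine h.congr' ?_
    filter_upwards [hk_atTop.eventually_gt_atTop 0] with i hki
    simp only [Function.comp_apply, id]
    field_simp
  have value : -(μ * H (b / μ)) = b * (1 + Real.log (μ / b)) - 0 - 0 - μ / (1 - 0) := by
    rw [mul_H_div hμ.ne', ← inv_div μ b, Real.log_inv]
    ring
  rw [value]
  refine ((((hk.mul (((tendsto_sub_mul_div hL hp hmp hk hb).log (by positivity)).const_add 1)).sub
    (tendsto_inv_atTop_zero.comp hL)).sub hlog).sub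
    (hmp.div (hp.const_sub 1) (by simp))).congr fun i => ?_
  simp only [Function.comp_apply, Pi.div_apply]
  ring

lemma tendsto_natCeil_mul_sub_one_div (hb : 0 < b) :
    Tendsto (fun x : ℝ => ((⌈b * x⌉₊ - 1 : ℕ) : ℝ) / x) atTop (nhds b) := by
  have h := (tendsto_nat_ceil_mul_div_atTop hb.le).sub tendsto_inv_atTop_zero
  rw [sub_zero] at h
  refine h.congr' ?_
  filter_upwards [eventually_gt_atTop 0] with x hx
  rw [Nat.cast_pred (Nat.ceil_pos.2 (by positivity))]
  ring

lemma eventually_le_binomialLowerTail (hL : Tendsto L l atTop)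
    (hp : Tendsto p l (nhdsWithin 0 (Ioi 0)))
    (hmp : Tendsto (fun i => m i * p i / L i) l (nhds μ)) (hb : 0 < b) (hμ : 0 < μ)
    (hκ : μ * H (b / μ) < κ) :
    ∀ᶠ i in l, Real.exp (-(κ * L i)) ≤ binomialLowerTail (m i) (p i) ⌈b * L i⌉₊ := by
  set k : ι → ℕ := fun i => ⌈b * L i⌉₊ - 1
  have hk : Tendsto (fun i => k i / L i) l (nhds b) :=
    (tendsto_natCeil_mul_sub_one_div hb).comp hL
  have hp₀ : Tendsto p l (nhds 0) := hp.mono_right nhdsWithin_le_nhds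
  filter_upwards [(tendsto_exponent_div hL hp₀ hmp hk hb hμ).eventually_const_lt (neg_lt_neg hκ),
    hL.eventually_gt_atTop 0, hp.eventually (Ioo_mem_nhdsGT one_pos),
    (tendsto_sub_mul_div hL hp₀ hmp hk hb).eventually_const_lt (div_pos hμ hb),
    hk.eventually_const_lt hb] with i hi hLi hpi hmk hkL
  have hk₀ : (0 : ℝ) < k i := (div_pos_iff_of_pos_right hLi).1 hkL
  have hkm : (k i : ℝ) < m i := by
    rw [div_pos_iff_of_pos_right hk₀] at hmk
    exact sub_pos.1 (pos_of_mul_pos_left hmk hpi.1.le)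
  rw [show ⌈b * L i⌉₊ = k i + 1 from
    (Nat.sub_add_cancel (Nat.one_le_ceil_iff.2 (by positivity))).symm]
  rw [lt_div_iff₀ hLi, neg_mul] at hi
  exact (Real.exp_le_exp.2 hi.le).trans
    (exp_le_binomialLowerTail hpi.1 hpi.2 (by exact_mod_cast hk₀) (by exact_mod_cast hkm))

end LargeDeviations

/-! ### The second moment method and Borel–Cantelli -/

/-- Chebyshev's inequality for the number of events that occur. -/
lemma measureReal_forall_notMem_le [IsProbabilityMeasure P] {ι : Type*} {I : Finset ι}
    {A : ι → Set Ω} (hA : ∀ i ∈ I, MeasurableSet (A i)) (hpos : 0 < ∑ i ∈ I, P.real (A i)) :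
    P.real {ω | ∀ i ∈ I, ω ∉ A i} ≤
      (∑ i ∈ I, ∑ j ∈ I, P.real (A i ∩ A j)) / (∑ i ∈ I, P.real (A i)) ^ 2 - 1 := by
  set W : Ω → ℝ := fun ω => ∑ i ∈ I, (A i).indicator 1 ω with hW
  have hmem (i) (hi : i ∈ I) : MemLp ((A i).indicator (1 : Ω → ℝ)) 2 P :=
    memLp_indicator_const 2 (hA i hi) 1 (Or.inr (measure_ne_top P _))
  have hWmem : MemLp W 2 P := memLp_finsetSum I hmem
  have mean : ∫ ω, W ω ∂P = ∑ i ∈ I, P.real (A i) := by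
    rw [integral_finsetSum I fun i hi => (hmem i hi).integrable one_le_two]
    exact Finset.sum_congr rfl fun i hi => integral_indicator_one (hA i hi)
  have secondMoment : ∫ ω, (W ^ 2) ω ∂P = ∑ i ∈ I, ∑ j ∈ I, P.real (A i ∩ A j) := by
    have hsq (ω : Ω) : (W ^ 2) ω = ∑ i ∈ I, ∑ j ∈ I, (A i ∩ A j).indicator 1 ω := by
      simp only [Pi.pow_apply, hW, sq, Finset.sum_mul_sum, inter_indicator_one, Pi.mul_apply]
    have hint (i) (hi : i ∈ I) (j) (hj : j ∈ I) :
        Integrable ((A i ∩ A j).indicator (1 : Ω → ℝ)) P :=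
      (integrable_const 1).indicator ((hA i hi).inter (hA j hj))
    simp_rw [hsq]
    rw [integral_finsetSum I fun i hi => integrable_finsetSum I (hint i hi)]
    refine Finset.sum_congr rfl fun i hi => ?_
    rw [integral_finsetSum I (hint i hi)]
    exact Finset.sum_congr rfl fun j hj => integral_indicator_one ((hA i hi).inter (hA j hj))
  have hsub : {ω | ∀ i ∈ I, ω ∉ A i} ⊆ {ω | ∑ i ∈ I, P.real (A i) ≤ |W ω - ∫ ω, W ω ∂P|} := by
    intro ω hω
    have hW₀ : W ω = 0 := Finset.sum_eq_zero fun i hi => Set.indicator_of_notMem (hω i hi) 1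
    simp [hW₀, mean, abs_of_pos hpos]
  calc P.real {ω | ∀ i ∈ I, ω ∉ A i}
      ≤ variance W P / (∑ i ∈ I, P.real (A i)) ^ 2 :=
        ENNReal.toReal_le_of_le_ofReal (by have := variance_nonneg W P; positivity)
          ((measure_mono hsub).trans (meas_ge_le_variance_div_sq hWmem hpos))
    _ = _ := by
        rw [variance_eq_sub hWmem, mean, secondMoment]
        field_simp

lemma ae_eventually_notMem_of_summable_measureReal [IsFiniteMeasure P] {B : ℕ → Set Ω}
    (h : Summable fun k => P.real (B k)) : ∀ᵐ ω ∂P, ∀ᶠ k in atTop, ω ∉ B k :=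
  ae_eventually_notMem (by simpa using h.tsum_ofReal_ne_top)

lemma ae_eventually_notMem_pow [IsFiniteMeasure P] {B : ℝ → Set Ω} {ε ρ : ℝ} (hε : 0 < ε)
    (hρ : 1 < ρ) (h : (fun x => P.real (B x)) =O[atTop] fun x => x ^ (-ε)) :
    ∀ᵐ ω ∂P, ∀ᶠ k : ℕ in atTop, ω ∉ B (ρ ^ k) := by
  have hρ₀ : 0 < ρ := one_pos.trans hρ
  refine ae_eventually_notMem_of_summable_measureReal (summable_of_isBigO_nat
    (summable_geometric_of_lt_one (by positivity)
      (Real.rpow_lt_one_of_one_lt_of_neg hρ (neg_lt_zero.2 hε)))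
    ((h.comp_tendsto (tendsto_pow_atTop_atTop_of_one_lt hρ)).congr_right fun k => ?_))
  rw [Function.comp_apply, ← Real.rpow_natCast, ← Real.rpow_natCast, ← Real.rpow_mul hρ₀.le,
    ← Real.rpow_mul hρ₀.le, mul_comm]

/-! ### Concentration of Poisson variables -/

lemma hasSum_exp_mul_poissonMeasure (r : NNReal) (t : ℝ) :
    HasSum (fun k : ℕ => Real.exp (-r) * (r : ℝ) ^ k / k.factorial * Real.exp (t * k))
      (Real.exp (r * (Real.exp t - 1))) := by
  have h := (NormedSpace.expSeries_div_hasSum_exp (r * Real.exp t)).mul_left (Real.exp (-r))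
  rw [← Real.exp_eq_exp_ℝ, ← Real.exp_add] at h
  rw [show (r : ℝ) * (Real.exp t - 1) = -r + r * Real.exp t by ring]
  refine h.congr_fun fun k => ?_
  rw [mul_comm t, Real.exp_nat_mul, mul_pow]
  ring

lemma integrable_exp_mul_poissonMeasure (r : NNReal) (t : ℝ) :
    Integrable (fun k : ℕ => Real.exp (t * k)) (poissonMeasure r) := by
  simpa [integrable_poissonMeasure_iff] using (hasSum_exp_mul_poissonMeasure r t).summable

lemma mgf_poissonMeasure (r : NNReal) (t : ℝ) :
    mgf (fun k : ℕ => (k : ℝ)) (poissonMeasure r) t = Real.exp (r * (Real.exp t - 1)) := by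
  rw [mgf, integral_poissonMeasure]
  exact (hasSum_exp_mul_poissonMeasure r t).tsum_eq

lemma exp_sub_one_le {t : ℝ} (ht : |t| ≤ 1) : Real.exp t - 1 ≤ t + t ^ 2 := by
  linarith [(abs_le.1 (Real.abs_exp_sub_one_sub_id_le ht)).2]

lemma poissonMeasure_real_le (r : NNReal) {η : ℝ} (h₀ : 0 ≤ η) (h₁ : η ≤ 1) :
    (poissonMeasure r).real {k | (1 + η) * r ≤ k} ≤ Real.exp (-(η ^ 2 / 4 * r)) := by
  refine (measure_ge_le_exp_mul_mgf ((1 + η) * r) (t := η / 2) (by positivity)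
    (integrable_exp_mul_poissonMeasure r _)).trans ?_
  rw [mgf_poissonMeasure, ← Real.exp_add, Real.exp_le_exp]
  have h := mul_le_mul_of_nonneg_left
    (exp_sub_one_le (t := η / 2) (abs_le.2 ⟨by linarith, by linarith⟩)) r.coe_nonneg
  linarith

lemma poissonMeasure_real_ge (r : NNReal) {η : ℝ} (h₀ : 0 ≤ η) (h₁ : η ≤ 1) :
    (poissonMeasure r).real {k | (k : ℝ) ≤ (1 - η) * r} ≤ Real.exp (-(η ^ 2 / 4 * r)) := by
  refine (measure_le_le_exp_mul_mgf ((1 - η) * r) (t := -(η / 2)) (by linarith)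
    (integrable_exp_mul_poissonMeasure r _)).trans ?_
  rw [mgf_poissonMeasure, ← Real.exp_add, Real.exp_le_exp]
  have h := mul_le_mul_of_nonneg_left
    (exp_sub_one_le (t := -(η / 2)) (abs_le.2 ⟨by linarith, by linarith⟩)) r.coe_nonneg
  linarith

lemma ae_eventually_poisson_mem_Icc [IsFiniteMeasure P] {N : ℕ → Ω → ℕ}
    (hN : ∀ n, HasLaw (N n) (poissonMeasure n) P) {η : ℝ} (h₀ : 0 < η) (h₁ : η ≤ 1) :
    ∀ᵐ ω ∂P, ∀ᶠ n : ℕ in atTop, (N n ω : ℝ) ∈ Icc ((1 - η) * n) ((1 + η) * n) := by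
  have hsum : Summable fun n : ℕ => Real.exp (-(η ^ 2 / 4 * n)) := by
    have h := Real.summable_exp_nat_mul_of_ge (c := -(η ^ 2 / 4))
      (neg_lt_zero.2 (by positivity))
      (f := fun n => n) fun n => le_rfl
    simpa [neg_mul] using h
  have key (S : ℕ → Set ℕ)
      (hS : ∀ n : ℕ, (poissonMeasure n).real (S n) ≤ Real.exp (-(η ^ 2 / 4 * n))) :
      ∀ᵐ ω ∂P, ∀ᶠ n : ℕ in atTop, N n ω ∉ S n :=
    ae_eventually_notMem_of_summable_measureReal (B := fun n => N n ⁻¹' S n) <|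
      hsum.of_nonneg_of_le (fun _ => measureReal_nonneg) fun n => by
        rw [← map_measureReal_apply_of_aemeasurable (hN n).aemeasurable (.of_discrete),
          (hN n).map_eq]
        exact hS n
  filter_upwards [key _ fun n => by simpa using poissonMeasure_real_le n h₀.le h₁,
    key _ fun n => by simpa using poissonMeasure_real_ge n h₀.le h₁] with ω hup hlo
  filter_upwards [hup, hlo] with n hup hlo
  exact ⟨(not_le.1 hlo).le, (not_le.1 hup).le⟩

/-! ### Geometry of the torus -/

/-- The embedding of the integer lattice into Euclidean space, by whose translates `torusDist`
is defined. -/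
def latticeHom (d : ℕ) : (Fin d → ℤ) →+ EuclideanSpace ℝ (Fin d) where
  toFun z := (WithLp.equiv 2 (Fin d → ℝ)).symm (fun i => (z i : ℝ))
  map_zero' := by ext i; simp
  map_add' a b := by ext i; simp

lemma latticeHom_apply (z : Fin d → ℤ) (i : Fin d) : latticeHom d z i = z i := rfl

lemma torusDist_eq_iInf (x y : EuclideanSpace ℝ (Fin d)) :
    torusDist x y = ⨅ z : Fin d → ℤ, ‖x - y - latticeHom d z‖ := rfl

lemma bddBelow_range_norm_sub_latticeHom (v : EuclideanSpace ℝ (Fin d)) :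
    BddBelow (Set.range fun z : Fin d → ℤ => ‖v - latticeHom d z‖) :=
  ⟨0, Set.forall_mem_range.2 fun _ => norm_nonneg _⟩

lemma torusDist_nonneg (x y : EuclideanSpace ℝ (Fin d)) : 0 ≤ torusDist x y :=
  Real.iInf_nonneg fun _ => norm_nonneg _

lemma torusDist_triangle_right (x x' y : EuclideanSpace ℝ (Fin d)) :
    torusDist x x' ≤ torusDist x y + torusDist x' y := by
  rw [torusDist_eq_iInf x y, torusDist_eq_iInf x' y]
  refine le_ciInf_add_ciInf fun z w => ?_
  calc torusDist x x' ≤ ‖x - x' - latticeHom d (z - w)‖ :=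
        ciInf_le (bddBelow_range_norm_sub_latticeHom _) (z - w)
    _ = ‖(x - y - latticeHom d z) - (x' - y - latticeHom d w)‖ := by
        rw [map_sub]
        congr 1
        abel
    _ ≤ _ := norm_sub_le _ _

lemma torusDist_add_latticeHom (x y : EuclideanSpace ℝ (Fin d)) (w : Fin d → ℤ) :
    torusDist x (latticeHom d w + y) = torusDist x y := by
  rw [torusDist_eq_iInf, torusDist_eq_iInf]
  refine Equiv.iInf_congr (Equiv.addRight w) fun z => ?_
  simp only [Equiv.coe_addRight, map_add]
  congr 1
  abel

lemma torusDist_self_add (x y : EuclideanSpace ℝ (Fin d)) :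
    torusDist x (x + y) = torusDist 0 y := by
  simp [torusDist_eq_iInf]

lemma abs_le_abs_add_intCast {t : ℝ} (ht : |t| ≤ 1 / 2) (k : ℤ) : |t| ≤ |t + k| := by
  rcases eq_or_ne k 0 with rfl | hk
  · simp
  · have h₁ : (1 : ℝ) ≤ |(k : ℝ)| := by exact_mod_cast Int.one_le_abs hk
    have h₂ := abs_sub_abs_le_abs_sub (k : ℝ) (-t)
    rw [abs_neg, sub_neg_eq_add, add_comm] at h₂
    linarith

lemma torusDist_zero_of_mem_cube {y : EuclideanSpace ℝ (Fin d)} (hy : y ∈ cube d) :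
    torusDist 0 y = ‖y‖ := by
  rw [torusDist_eq_iInf]
  have h₀ := ciInf_le (bddBelow_range_norm_sub_latticeHom (0 - y)) 0
  rw [map_zero, sub_zero, zero_sub, norm_neg] at h₀
  refine le_antisymm (by simpa using h₀) (le_ciInf fun z => ?_)
  rw [zero_sub, ← norm_neg (_ - _), neg_sub, sub_neg_eq_add, add_comm, EuclideanSpace.norm_eq,
    EuclideanSpace.norm_eq]
  gcongr with i
  rw [PiLp.add_apply, latticeHom_apply]
  exact abs_le_abs_add_intCast (abs_le.2 ⟨(hy i).1.le, (hy i).2⟩) (z i)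

lemma measurableSet_cube : MeasurableSet (cube d) := by
  rw [cube, Set.ofPred_forall]
  exact MeasurableSet.iInter fun i => measurableSet_Ioc.preimage (by fun_prop)

lemma measurable_torusDist {δ : Type*} {mδ : MeasurableSpace δ}
    {f h : δ → EuclideanSpace ℝ (Fin d)} (hf : Measurable f) (hh : Measurable h) :
    Measurable fun w => torusDist (f w) (h w) := by
  simp only [torusDist_eq_iInf]
  exact Measurable.iInf fun z => by fun_prop

lemma isAddFundamentalDomain_translate_cube (x : EuclideanSpace ℝ (Fin d)) :
    IsAddFundamentalDomain (latticeHom d).range {y | y - x ∈ cube d} volume := by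
  refine IsAddFundamentalDomain.mk'
    (measurableSet_cube.preimage (measurable_id.sub_const x)).nullMeasurableSet fun v => ?_
  have coord (i) : ∃! k : ℤ, (k : ℝ) + v i - x i ∈ Set.Ioc (-(1 / 2) : ℝ) (1 / 2) := by
    have h := existsUnique_add_zsmul_mem_Ioc one_pos (v i - x i) (-(1 / 2))
    simpa only [zsmul_one, show -(1 / 2) + 1 = (1 / 2 : ℝ) by norm_num, add_comm, add_sub_assoc]
      using h
  choose z hz hunique using coord
  refine ⟨⟨latticeHom d z, z, rfl⟩, hz, ?_⟩
  rintro ⟨_, w, rfl⟩ hw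
  have hwz : w = z := funext fun i => hunique i (w i) (hw i)
  simp only [hwz]

lemma lintegral_cube_torusDist (f : ℝ → ENNReal) (x : EuclideanSpace ℝ (Fin d)) :
    ∫⁻ y in cube d, f (torusDist x y) = ∫⁻ y in cube d, f ‖y‖ := by
  have : Countable (latticeHom d).range := (Set.countable_range (latticeHom d)).to_subtype
  have hcube : IsAddFundamentalDomain (latticeHom d).range (cube d) volume := by
    simpa using isAddFundamentalDomain_translate_cube (0 : EuclideanSpace ℝ (Fin d))
  have hpre : (fun y => x + y) ⁻¹' {y | y - x ∈ cube d} = cube d := by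
    ext y
    simp
  calc ∫⁻ y in cube d, f (torusDist x y)
      = ∫⁻ y in {y | y - x ∈ cube d}, f (torusDist x y) := by
        refine hcube.setLIntegral_eq (isAddFundamentalDomain_translate_cube x) _ ?_
        rintro ⟨_, w, rfl⟩ y
        exact congrArg f (torusDist_add_latticeHom x y w)
    _ = ∫⁻ y in cube d, f (torusDist x (x + y)) := by
        rw [← (measurePreserving_add_left volume x).setLIntegral_comp_preimage_emb
          (measurableEmbedding_addLeft x), hpre]
    _ = ∫⁻ y in cube d, f ‖y‖ :=
        setLIntegral_congr_fun measurableSet_cube fun y hy => by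
          rw [torusDist_self_add, torusDist_zero_of_mem_cube hy]

lemma volume_real_ball_zero {R : ℝ} (hR : 0 < R) :
    volume.real (Metric.ball (0 : EuclideanSpace ℝ (Fin d)) R) =
      R ^ d * volume.real (Metric.ball (0 : EuclideanSpace ℝ (Fin d)) 1) := by
  rw [measureReal_def, Measure.addHaar_ball_of_pos _ _ hR, ENNReal.toReal_mul,
    ENNReal.toReal_ofReal (by positivity), finrank_euclideanSpace_fin, measureReal_def]

/-! ### Independence of the inputs of the model -/

lemma setLIntegral_eq_of_indep {Ω β β' : Type*} [MeasurableSpace β] [MeasurableSpace β']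
    {m mΩ : MeasurableSpace Ω} {P : Measure Ω} [IsProbabilityMeasure P] (hm : m ≤ mΩ) {W : Ω → β}
    {Y : Ω → β'} (hW : Measurable[m] W) (hY : Measurable Y)
    (h : Indep m (MeasurableSpace.comap Y inferInstance) P) {F : Set Ω} (hF : MeasurableSet[m] F)
    {φ : β × β' → ENNReal} (hφ : Measurable φ) :
    ∫⁻ ω in F, φ (W ω, Y ω) ∂P = ∫⁻ ω in F, ∫⁻ y, φ (W ω, y) ∂P.map Y ∂P := by
  have hW' : Measurable W := hW.mono hm le_rfl
  have := Measure.isProbabilityMeasure_map (hY.aemeasurable (μ := P))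
  have law : ((P.restrict F).map W).prod (P.map Y) = (P.restrict F).map fun ω => (W ω, Y ω) := by
    refine Measure.prod_eq fun s t hs ht => ?_
    rw [Measure.map_apply (hW'.prodMk hY) (hs.prod ht), Measure.map_apply hW' hs,
      Measure.map_apply hY ht, Measure.restrict_apply (hW' hs),
      Measure.restrict_apply ((hW'.prodMk hY) (hs.prod ht)), Set.mk_preimage_prod,
      Set.inter_right_comm]
    exact (Indep_iff _ _ _).1 h _ _ ((hW hs).inter hF) ⟨t, ht, rfl⟩
  rw [← lintegral_map hφ (hW'.prodMk hY), ← law, lintegral_prod _ hφ.aemeasurable,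
    lintegral_map hφ.lintegral_prod_right' hW']

lemma volume_restrict_Icc_Iic {a : ℝ} (ha : a ≤ 1) :
    volume.restrict (Set.Icc (0 : ℝ) 1) (Set.Iic a) = ENNReal.ofReal a := by
  rw [Measure.restrict_apply measurableSet_Iic, Set.inter_comm]
  have h : Set.Icc 0 1 ∩ Set.Iic a = Set.Icc 0 a := by
    ext t
    simp only [Set.mem_inter_iff, Set.mem_Icc, Set.mem_Iic]
    grind
  rw [h, Real.volume_Icc, sub_zero]

lemma measure_inter_setOf_le_of_indep {Ω : Type*} {m mΩ : MeasurableSpace Ω} {P : Measure Ω}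
    [IsProbabilityMeasure P] (hm : m ≤ mΩ) {h U : Ω → ℝ} (hh : Measurable[m] h)
    (h_le : ∀ ω, h ω ≤ 1) (hU : Measurable U) (hlaw : P.map U = volume.restrict (Set.Icc 0 1))
    (hind : Indep m (MeasurableSpace.comap U inferInstance) P) {F : Set Ω}
    (hF : MeasurableSet[m] F) :
    P (F ∩ {ω | U ω ≤ h ω}) = ∫⁻ ω in F, ENNReal.ofReal (h ω) ∂P := by
  have hS : MeasurableSet {w : ℝ × ℝ | w.2 ≤ w.1} := measurableSet_le measurable_snd measurable_fst
  have hUh : MeasurableSet {ω | U ω ≤ h ω} := measurableSet_le hU (hh.mono hm le_rfl)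
  have key := setLIntegral_eq_of_indep hm hh hU hind hF (measurable_one.indicator hS)
  calc P (F ∩ {ω | U ω ≤ h ω})
      = ∫⁻ ω in F, {ω | U ω ≤ h ω}.indicator 1 ω ∂P := by
        rw [lintegral_indicator_one hUh, Measure.restrict_apply hUh, Set.inter_comm]
    _ = ∫⁻ ω in F, ∫⁻ u, (Set.Iic (h ω)).indicator 1 u ∂P.map U ∂P := key
    _ = ∫⁻ ω in F, ENNReal.ofReal (h ω) ∂P := by
        simp_rw [hlaw, lintegral_indicator_one measurableSet_Iic, volume_restrict_Icc_Iic (h_le _)]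

/-- Indices of the position variables `X i` and of the edge variables `U i j`. -/
abbrev InputIdx : Type := {i : ℕ // 1 ≤ i} ⊕ {p : ℕ × ℕ // 1 ≤ p.1 ∧ p.1 < p.2}

/-- The index of the edge variable of the pair `{i, j}`. -/
def edgeIdx {i j : ℕ} (hi : 1 ≤ i) (hj : 1 ≤ j) (hij : i ≠ j) : InputIdx :=
  Sum.inr ⟨(min i j, max i j), le_min hi hj, min_lt_max.2 hij⟩

/-- The indices of the input variables which do not involve the vertex `l`. -/
def avoid (l : ℕ) : Set InputIdx :=
  {a | Sum.elim (fun i => i.1 ≠ l) (fun p => p.1.1 ≠ l ∧ p.1.2 ≠ l) a}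

lemma edgeIdx_mem_avoid {l i j : ℕ} (hi : 1 ≤ i) (hj : 1 ≤ j) (hij : i ≠ j) (hil : i ≠ l)
    (hjl : j ≠ l) : edgeIdx hi hj hij ∈ avoid l := by
  simp only [avoid, edgeIdx, Set.mem_ofPred_eq, Sum.elim_inr]
  omega

lemma edgeIdx_notMem_avoid {l i : ℕ} (hi : 1 ≤ i) (hl : 1 ≤ l) (hil : i ≠ l) :
    edgeIdx hi hl hil ∉ avoid l := by
  simp only [avoid, edgeIdx, Set.mem_ofPred_eq, Sum.elim_inr]
  omega

lemma edgeIdx_ne_edgeIdx {i j l : ℕ} (hi : 1 ≤ i) (hj : 1 ≤ j) (hl : 1 ≤ l) (hij : i ≠ j)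
    (hil : i ≠ l) (hjl : j ≠ l) : edgeIdx hi hl hil ≠ edgeIdx hj hl hjl := by
  simp only [edgeIdx, ne_eq, Sum.inr.injEq, Subtype.mk.injEq, Prod.mk.injEq]
  omega

namespace Model

/-- The edge variable of the pair `{i, j}`, whatever the order of `i` and `j`. -/
def edgeVar (M : Model d P) (i j : ℕ) (ω : Ω) : ℝ := M.U (min i j) (max i j) ω

/-- The σ-algebra generated by one position or edge variable. -/
@[reducible] def inputSigma (M : Model d P) : InputIdx → MeasurableSpace Ω
  | .inl i => MeasurableSpace.comap (M.X i) inferInstance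
  | .inr p => MeasurableSpace.comap (M.U p.1.1 p.1.2) inferInstance

/-- The σ-algebra generated by the input variables with indices in `S`. -/
@[reducible] def sigmaOf (M : Model d P) (S : Set InputIdx) : MeasurableSpace Ω :=
  ⨆ a ∈ S, M.inputSigma a

variable (M : Model d P)

lemma inputSigma_le (a : InputIdx) : M.inputSigma a ≤ ‹MeasurableSpace Ω› := by
  rcases a with i | p
  · exact (M.X_meas i).comap_le
  · exact (M.U_meas _ _).comap_le

lemma sigmaOf_le (S : Set InputIdx) : M.sigmaOf S ≤ ‹MeasurableSpace Ω› :=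
  iSup₂_le fun a _ => M.inputSigma_le a

lemma iIndep_inputSigma : iIndep M.inputSigma P := by
  rw [iIndep_iff]
  intro s f hf
  have hXU := M.families_indep.indep (i := 0) (j := 2) (by decide)
  have hsplit : (⋂ a ∈ s, f a) =
      (⋂ i ∈ s.toLeft, f (.inl i)) ∩ ⋂ p ∈ s.toRight, f (.inr p) := by
    ext ω
    simp [Set.mem_iInter]
  have hX : MeasurableSet[MeasurableSpace.comap (fun ω => fun i : ℕ => M.X i ω) inferInstance]
      (⋂ i ∈ s.toLeft, f (.inl i)) := by
    refine Finset.measurableSet_biInter _ fun i hi => ?_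
    obtain ⟨t, ht, hte⟩ := hf _ (Finset.mem_toLeft.1 hi)
    exact ⟨(fun x => x i.1) ⁻¹' t, ht.preimage (measurable_pi_apply _), hte⟩
  have hU : MeasurableSet[MeasurableSpace.comap (fun ω => fun p : ℕ × ℕ => M.U p.1 p.2 ω)
      inferInstance] (⋂ p ∈ s.toRight, f (.inr p)) := by
    refine Finset.measurableSet_biInter _ fun p hp => ?_
    obtain ⟨t, ht, hte⟩ := hf _ (Finset.mem_toRight.1 hp)
    exact ⟨(fun x => x p.1) ⁻¹' t, ht.preimage (measurable_pi_apply _), hte⟩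
  rw [hsplit, (Indep_iff _ _ _).1 hXU _ _ hX hU,
    M.X_indep.meas_biInter (s := fun i => f (.inl i)) fun i hi => hf _ (Finset.mem_toLeft.1 hi),
    M.U_indep.meas_biInter (s := fun p => f (.inr p)) fun p hp => hf _ (Finset.mem_toRight.1 hp),
    ← Finset.prod_disjSum _ _ fun a => P (f a), Finset.toLeft_disjSum_toRight]

lemma indep_sigmaOf_comap {S : Set InputIdx} {a : InputIdx} (ha : a ∉ S) {β : Type*}
    [MeasurableSpace β] {Y : Ω → β} (hY : Measurable[M.inputSigma a] Y) :
    Indep (M.sigmaOf S) (MeasurableSpace.comap Y inferInstance) P := by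
  have h := indep_iSup_of_disjoint M.inputSigma_le M.iIndep_inputSigma
    (Set.disjoint_singleton_right.2 ha)
  exact indep_of_indep_of_le_right h
    (hY.comap_le.trans (le_iSup₂_of_le (f := fun b _ => M.inputSigma b) a rfl le_rfl))

lemma measurable_X {S : Set InputIdx} {i : ℕ} (hi : 1 ≤ i) (hS : Sum.inl ⟨i, hi⟩ ∈ S) :
    Measurable[M.sigmaOf S] (M.X i) :=
  (comap_measurable (M.X i)).mono
    (le_iSup₂_of_le (f := fun a _ => M.inputSigma a) _ hS le_rfl) le_rfl

lemma measurable_edgeVar {S : Set InputIdx} {i j : ℕ} (hi : 1 ≤ i) (hj : 1 ≤ j) (hij : i ≠ j)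
    (hS : edgeIdx hi hj hij ∈ S) : Measurable[M.sigmaOf S] (M.edgeVar i j) :=
  (comap_measurable (M.U (min i j) (max i j))).mono
    (le_iSup₂_of_le (f := fun a _ => M.inputSigma a) _ hS le_rfl) le_rfl

lemma sigmaOf_avoid_le {i l : ℕ} (hi : 1 ≤ i) (hl : 1 ≤ l) (hil : i ≠ l) :
    M.sigmaOf (avoid l) ≤ M.sigmaOf {edgeIdx hi hl hil}ᶜ :=
  biSup_mono fun _ ha h => edgeIdx_notMem_avoid hi hl hil (h ▸ ha)

lemma setLIntegral_torusDist_X [IsProbabilityMeasure P] {i l : ℕ} (hi : 1 ≤ i) (hl : 1 ≤ l)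
    (hil : i ≠ l) {E : Set Ω} (hE : MeasurableSet[M.sigmaOf (avoid l)] E) {f : ℝ → ENNReal}
    (hf : Measurable f) :
    ∫⁻ ω in E, f (torusDist (M.X i ω) (M.X l ω)) ∂P = (∫⁻ y in cube d, f ‖y‖) * P E := by
  have hind : Indep (M.sigmaOf (avoid l)) (MeasurableSpace.comap (M.X l) inferInstance) P :=
    M.indep_sigmaOf_comap (a := Sum.inl ⟨l, hl⟩) (by simp [avoid]) (comap_measurable (M.X l))
  refine (setLIntegral_eq_of_indep (M.sigmaOf_le _) (M.measurable_X hi hil) (M.X_meas l) hind hE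
    (hf.comp (measurable_torusDist measurable_fst measurable_snd))).trans ?_
  simp only [M.X_unif l hl, Function.comp_apply, lintegral_cube_torusDist f, setLIntegral_const]

lemma isProbabilityMeasure_cube (M : Model d P) [IsProbabilityMeasure P] :
    IsProbabilityMeasure (volume.restrict (cube d)) := by
  rw [← M.X_unif 1 le_rfl]
  exact Measure.isProbabilityMeasure_map (M.X_meas 1).aemeasurable

lemma measureReal_torusDist_lt_le [IsProbabilityMeasure P] {R : ℝ} (hR : 0 < R) {i j : ℕ}
    (hi : 1 ≤ i) (hj : 1 ≤ j) (hij : i ≠ j) :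
    P.real {ω | torusDist (M.X i ω) (M.X j ω) < R} ≤
      R ^ d * volume.real (Metric.ball (0 : EuclideanSpace ℝ (Fin d)) 1) := by
  have hms : MeasurableSet {ω | torusDist (M.X i ω) (M.X j ω) < R} :=
    measurableSet_lt (measurable_torusDist (M.X_meas i) (M.X_meas j)) measurable_const
  have key := M.setLIntegral_torusDist_X hi hj hij MeasurableSet.univ
    (measurable_one.indicator (measurableSet_Iio (a := R)))
  have hball : P {ω | torusDist (M.X i ω) (M.X j ω) < R} ≤
      volume (Metric.ball (0 : EuclideanSpace ℝ (Fin d)) R) := calc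
    _ = ∫⁻ ω in univ, (Set.Iio R).indicator 1 (torusDist (M.X i ω) (M.X j ω)) ∂P := by
        rw [setLIntegral_univ, ← lintegral_indicator_one hms]
        rfl
    _ = ∫⁻ y in cube d, (Metric.ball (0 : EuclideanSpace ℝ (Fin d)) R).indicator 1 y := by
        rw [key, measure_univ, mul_one]
        exact lintegral_congr fun y => by simp [Set.indicator]
    _ ≤ _ := by
        rw [lintegral_indicator_one measurableSet_ball]
        exact Measure.restrict_apply_le _ _
  calc P.real {ω | torusDist (M.X i ω) (M.X j ω) < R}
      ≤ volume.real (Metric.ball (0 : EuclideanSpace ℝ (Fin d)) R) :=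
        ENNReal.toReal_mono measure_ball_lt_top.ne hball
    _ = _ := volume_real_ball_zero hR

end Model

/-! ### Connection probabilities -/

lemma cube_mem_nhds_zero : cube d ∈ nhds (0 : EuclideanSpace ℝ (Fin d)) := by
  rw [cube, Set.ofPred_forall]
  refine Filter.iInter_mem.2 fun i => ?_
  have h : Continuous fun x : EuclideanSpace ℝ (Fin d) => x i := by fun_prop
  exact h.continuousAt.preimage_mem_nhds (Ioc_mem_nhds (by simp) (by simp))

namespace Model

variable (M : Model d P)

/-- The connection function, extended to the left of `0` by its value at `0` in order to be
antitone on `ℝ`. -/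
def connFun (t : ℝ) : ℝ := M.g (max t 0)

lemma connFun_of_nonneg {t : ℝ} (ht : 0 ≤ t) : M.connFun t = M.g t := by
  rw [connFun, max_eq_left ht]

lemma antitone_connFun : Antitone M.connFun := fun _ _ hab =>
  M.g_antitone (Set.mem_Ici.2 (le_max_right _ _)) (Set.mem_Ici.2 (le_max_right _ _))
    (max_le_max_right 0 hab)

lemma connFun_nonneg (t : ℝ) : 0 ≤ M.connFun t := (M.g_mem _ (le_max_right _ _)).1

lemma connFun_le_one (t : ℝ) : M.connFun t ≤ 1 := (M.g_mem _ (le_max_right _ _)).2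

lemma integrable_connFun_norm :
    Integrable fun x : EuclideanSpace ℝ (Fin d) => M.connFun ‖x‖ := by
  simpa only [M.connFun_of_nonneg (norm_nonneg _)] using M.g_integrable

lemma integral_connFun_norm : ∫ x : EuclideanSpace ℝ (Fin d), M.connFun ‖x‖ = M.α := by
  simpa only [M.connFun_of_nonneg (norm_nonneg _)] using M.α_def.symm

/-- Markov's inequality; it makes `connFun` decay polynomially. -/
lemma connFun_mul_pow_le {D : ℝ} (hD : 0 < D) :
    M.connFun D * (D ^ d * volume.real (Metric.ball (0 : EuclideanSpace ℝ (Fin d)) 1)) ≤ M.α := by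
  calc _ ≤ ∫ x in Metric.ball (0 : EuclideanSpace ℝ (Fin d)) D, M.connFun ‖x‖ := by
        rw [← volume_real_ball_zero hD]
        exact setIntegral_ge_of_const_le_real measurableSet_ball measure_ball_lt_top.ne
          (fun x hx => M.antitone_connFun (mem_ball_zero_iff.1 hx).le)
          M.integrable_connFun_norm.integrableOn
    _ ≤ M.α := M.integral_connFun_norm ▸ setIntegral_le_integral M.integrable_connFun_norm
        (Eventually.of_forall fun _ => M.connFun_nonneg _)

/-- The probability that two given vertices satisfy the connection rule at scale `r`. -/
def connProb (r : ℝ) : ℝ := ∫ y in cube d, M.connFun (‖y‖ / r)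

lemma connProb_nonneg (r : ℝ) : 0 ≤ M.connProb r := integral_nonneg fun _ => M.connFun_nonneg _

open scoped Pointwise in
lemma connProb_eq_pow_mul {r : ℝ} (hr : 0 < r) :
    M.connProb r = r ^ d * ∫ y in r⁻¹ • cube d, M.connFun ‖y‖ := by
  have h (y : EuclideanSpace ℝ (Fin d)) : M.connFun (‖y‖ / r) = M.connFun ‖r⁻¹ • y‖ := by
    rw [norm_smul, Real.norm_of_nonneg (inv_nonneg.2 hr.le), div_eq_inv_mul]
  simp_rw [connProb, h]
  rw [Measure.setIntegral_comp_smul_of_pos volume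
    (fun y : EuclideanSpace ℝ (Fin d) => M.connFun ‖y‖) _ (inv_pos.2 hr),
    finrank_euclideanSpace_fin, smul_eq_mul, inv_pow, inv_inv]

open scoped Pointwise in
lemma tendsto_connProb_div_pow :
    Tendsto (fun r => M.connProb r / r ^ d) (nhdsWithin 0 (Ioi 0)) (nhds M.α) := by
  have cover : AECover volume (nhdsWithin (0 : ℝ) (Ioi 0)) fun r => r⁻¹ • cube d := by
    refine ⟨Eventually.of_forall fun x => ?_, fun r => measurableSet_cube.const_smul₀ r⁻¹⟩
    have h : Tendsto (fun r : ℝ => r • x) (nhdsWithin 0 (Ioi 0)) (nhds 0) :=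
      ((continuous_id.smul continuous_const).tendsto' 0 0 (zero_smul ℝ x)).mono_left
        nhdsWithin_le_nhds
    filter_upwards [h.eventually_mem cube_mem_nhds_zero, self_mem_nhdsWithin] with r hx hr
    rwa [Set.mem_inv_smul_set_iff₀ (ne_of_gt hr)]
  have h := cover.integral_tendsto_of_countably_generated M.integrable_connFun_norm
  rw [M.integral_connFun_norm] at h
  refine h.congr' ?_
  filter_upwards [self_mem_nhdsWithin] with r (hr : 0 < r)
  rw [M.connProb_eq_pow_mul hr, mul_div_cancel_left₀ _ (by positivity)]

lemma lintegral_cube_connFun [IsProbabilityMeasure P] (r : ℝ) :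
    ∫⁻ y in cube d, ENNReal.ofReal (M.connFun (‖y‖ / r)) = ENNReal.ofReal (M.connProb r) := by
  have := M.isProbabilityMeasure_cube
  refine (ofReal_integral_eq_lintegral_ofReal (Integrable.of_bound
    (M.antitone_connFun.measurable.comp (by fun_prop)).aestronglyMeasurable 1
    (Eventually.of_forall fun y => ?_)) (Eventually.of_forall fun _ => M.connFun_nonneg _)).symm
  rw [Function.comp_apply, Real.norm_of_nonneg (M.connFun_nonneg _)]
  exact M.connFun_le_one _

/-- The radius `r̂` as a function of a real intensity. -/
def scale (γ x : ℝ) : ℝ := (γ * Real.log x / (M.α * x)) ^ ((1 : ℝ) / d)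

lemma scale_natCast (γ : ℝ) (n : ℕ) : M.scale γ n = rhat M γ n := rfl

variable {γ : ℝ}

lemma scale_base_pos (hγ : 0 < γ) {x : ℝ} (hx : 1 < x) : 0 < γ * Real.log x / (M.α * x) := by
  have := M.α_pos
  have := Real.log_pos hx
  positivity

lemma scale_pos (hγ : 0 < γ) {x : ℝ} (hx : 1 < x) : 0 < M.scale γ x :=
  Real.rpow_pos_of_pos (M.scale_base_pos hγ hx) _

lemma scale_pow (hd : d ≠ 0) (hγ : 0 < γ) {x : ℝ} (hx : 1 < x) :
    M.scale γ x ^ d = γ * Real.log x / (M.α * x) := by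
  rw [scale, one_div, Real.rpow_inv_natCast_pow (M.scale_base_pos hγ hx).le hd]

lemma scale_le_scale (hγ : 0 < γ) {x y : ℝ} (hx : Real.exp 1 ≤ x) (hxy : x ≤ y) :
    M.scale γ y ≤ M.scale γ x := by
  have hα := M.α_pos
  have hx₁ : 1 < x := (Real.one_lt_exp_iff.2 one_pos).trans_le hx
  refine Real.rpow_le_rpow (M.scale_base_pos hγ (hx₁.trans_le hxy)).le ?_ (by positivity)
  calc γ * Real.log y / (M.α * y) = γ / M.α * (Real.log y / y) := by ring
    _ ≤ γ / M.α * (Real.log x / x) :=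
        mul_le_mul_of_nonneg_left (Real.log_div_self_antitoneOn hx (hx.trans hxy) hxy)
          (by positivity)
    _ = _ := by ring

lemma tendsto_scale (hd : d ≠ 0) (hγ : 0 < γ) :
    Tendsto (M.scale γ) atTop (nhdsWithin 0 (Ioi 0)) := by
  refine tendsto_nhdsWithin_iff.2 ⟨?_, (eventually_gt_atTop 1).mono fun _ => M.scale_pos hγ⟩
  have hbase : Tendsto (fun x : ℝ => γ * Real.log x / (M.α * x)) atTop (nhds 0) := by
    have h := (Real.isLittleO_log_id_atTop.tendsto_div_nhds_zero).const_mul (γ / M.α)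
    rw [mul_zero] at h
    exact h.congr fun x => by simp only [id]; ring
  have hpow := hbase.rpow_const (p := (1 : ℝ) / d) (Or.inr (by positivity))
  rwa [Real.zero_rpow (by positivity)] at hpow

lemma tendsto_mul_connProb_scale_div_log (hd : d ≠ 0) (hγ : 0 < γ) :
    Tendsto (fun x => x * M.connProb (M.scale γ x) / Real.log x) atTop (nhds γ) := by
  have hα := M.α_pos
  have h := (M.tendsto_connProb_div_pow.comp (M.tendsto_scale hd hγ)).mul_const (γ / M.α)
  rw [mul_div_cancel₀ γ hα.ne'] at h
  refine h.congr' ?_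
  filter_upwards [eventually_gt_atTop 1] with x hx
  have := Real.log_pos hx
  rw [Function.comp_apply, M.scale_pow hd hγ hx]
  field_simp

lemma tendsto_connProb_scale (hd : d ≠ 0) (hγ : 0 < γ) :
    Tendsto (fun x => M.connProb (M.scale γ x)) atTop (nhdsWithin 0 (Ioi 0)) := by
  have h := M.tendsto_mul_connProb_scale_div_log hd hγ
  refine tendsto_nhdsWithin_iff.2 ⟨?_, ?_⟩
  · have h₀ := h.mul Real.isLittleO_log_id_atTop.tendsto_div_nhds_zero
    rw [mul_zero] at h₀
    refine h₀.congr' ?_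
    filter_upwards [eventually_gt_atTop 1] with x hx
    have := Real.log_pos hx
    simp only [id]
    field_simp
  · filter_upwards [h.eventually_const_lt hγ, eventually_gt_atTop 1] with x hx hx₁
    exact pos_of_mul_pos_right ((div_pos_iff_of_pos_right (Real.log_pos hx₁)).1 hx) (by linarith)

lemma tendsto_natFloor_mul_sub_one_mul_connProb_scale (hd : d ≠ 0) (hγ : 0 < γ) {c : ℝ}
    (hc : 0 < c) :
    Tendsto (fun x : ℝ => (⌊c * x⌋₊ - 1 : ℕ) * M.connProb (M.scale γ x) / Real.log x) atTop
      (nhds (γ * c)) := by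
  have hfloor : Tendsto (fun x : ℝ => ((⌊c * x⌋₊ - 1 : ℕ) : ℝ) / x) atTop (nhds c) := by
    have h := (tendsto_nat_floor_mul_div_atTop hc.le).sub tendsto_inv_atTop_zero
    rw [sub_zero] at h
    refine h.congr' ?_
    filter_upwards [eventually_ge_atTop c⁻¹] with x hx
    rw [Nat.cast_pred (Nat.floor_pos.2 ((inv_le_iff_one_le_mul₀' hc).1 hx))]
    ring
  rw [mul_comm γ]
  refine (hfloor.mul (M.tendsto_mul_connProb_scale_div_log hd hγ)).congr' ?_
  filter_upwards [eventually_gt_atTop 0] with x hx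
  field_simp

/-! ### Edges -/

/-- The event that `i` and `j` satisfy the connection rule at scale `r`. -/
def edge (r : ℝ) (i j : ℕ) : Set Ω :=
  {ω | M.edgeVar i j ω ≤ M.connFun (torusDist (M.X i ω) (M.X j ω) / r)}

variable {r : ℝ} {i j l : ℕ}

lemma measurable_connFun_torusDist {S : Set InputIdx} (hi : 1 ≤ i) (hj : 1 ≤ j)
    (hSi : Sum.inl ⟨i, hi⟩ ∈ S) (hSj : Sum.inl ⟨j, hj⟩ ∈ S) :
    Measurable[M.sigmaOf S] fun ω => M.connFun (torusDist (M.X i ω) (M.X j ω) / r) :=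
  M.antitone_connFun.measurable.comp
    ((measurable_torusDist (M.measurable_X hi hSi) (M.measurable_X hj hSj)).div_const r)

lemma measurableSet_edge {S : Set InputIdx} (hi : 1 ≤ i) (hj : 1 ≤ j) (hij : i ≠ j)
    (hSi : Sum.inl ⟨i, hi⟩ ∈ S) (hSj : Sum.inl ⟨j, hj⟩ ∈ S) (hSij : edgeIdx hi hj hij ∈ S) :
    MeasurableSet[M.sigmaOf S] (M.edge r i j) :=
  measurableSet_le (mδ := M.sigmaOf S) (M.measurable_edgeVar hi hj hij hSij)
    (M.measurable_connFun_torusDist hi hj hSi hSj)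

lemma measure_inter_edge [IsProbabilityMeasure P] (hi : 1 ≤ i) (hl : 1 ≤ l) (hil : i ≠ l)
    {F : Set Ω} (hF : MeasurableSet[M.sigmaOf {edgeIdx hi hl hil}ᶜ] F) :
    P (F ∩ M.edge r i l) =
      ∫⁻ ω in F, ENNReal.ofReal (M.connFun (torusDist (M.X i ω) (M.X l ω) / r)) ∂P :=
  measure_inter_setOf_le_of_indep (M.sigmaOf_le _)
    (M.measurable_connFun_torusDist hi hl (by simp [edgeIdx]) (by simp [edgeIdx]))
    (fun _ => M.connFun_le_one _) (M.U_meas _ _) (M.U_unif _ _ (le_min hi hl) (min_lt_max.2 hil))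
    (M.indep_sigmaOf_comap (a := edgeIdx hi hl hil) (by simp) (comap_measurable _)) hF

lemma measureReal_inter_edge [IsProbabilityMeasure P] (hi : 1 ≤ i) (hl : 1 ≤ l) (hil : i ≠ l)
    {E : Set Ω} (hE : MeasurableSet[M.sigmaOf (avoid l)] E) :
    P.real (E ∩ M.edge r i l) = M.connProb r * P.real E := by
  have h := M.setLIntegral_torusDist_X hi hl hil hE
    (f := fun t => ENNReal.ofReal (M.connFun (t / r)))
    (M.antitone_connFun.measurable.comp (by fun_prop)).ennreal_ofReal
  rw [measureReal_def, M.measure_inter_edge hi hl hil (M.sigmaOf_avoid_le hi hl hil _ hE), h,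
    M.lintegral_cube_connFun, ENNReal.toReal_mul, ENNReal.toReal_ofReal (M.connProb_nonneg r),
    measureReal_def]

lemma connProb_le_one [IsProbabilityMeasure P] : M.connProb r ≤ 1 := by
  have h := M.measureReal_inter_edge (r := r) le_rfl one_le_two (by norm_num) MeasurableSet.univ
  rw [probReal_univ, mul_one] at h
  exact h ▸ measureReal_le_one

lemma measureReal_inter_edge_le_of_le_torusDist [IsProbabilityMeasure P] (hi : 1 ≤ i) (hl : 1 ≤ l)
    (hil : i ≠ l) {F : Set Ω} (hF : MeasurableSet[M.sigmaOf {edgeIdx hi hl hil}ᶜ] F) {D : ℝ}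
    (hfar : ∀ ω ∈ F, D ≤ torusDist (M.X i ω) (M.X l ω) / r) :
    P.real (F ∩ M.edge r i l) ≤ M.connFun D * P.real F := by
  have h : P (F ∩ M.edge r i l) ≤ ENNReal.ofReal (M.connFun D) * P F := by
    rw [M.measure_inter_edge hi hl hil hF, ← setLIntegral_const]
    exact setLIntegral_mono' (M.sigmaOf_le _ _ hF) fun ω hω =>
      ENNReal.ofReal_le_ofReal (M.antitone_connFun (hfar ω hω))
  have := ENNReal.toReal_mono (by finiteness) h
  rwa [ENNReal.toReal_mul, ENNReal.toReal_ofReal (M.connFun_nonneg D)] at this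

/-- If `i` and `j` are far apart, then a common neighbour is far from one of them. -/
lemma measureReal_inter_edge_inter_edge_le [IsProbabilityMeasure P] (hr : 0 < r) (hi : 1 ≤ i)
    (hj : 1 ≤ j) (hl : 1 ≤ l) (hij : i ≠ j) (hil : i ≠ l) (hjl : j ≠ l) {E : Set Ω}
    (hE : MeasurableSet[M.sigmaOf (avoid l)] E) {D : ℝ}
    (hfar : ∀ ω ∈ E, 2 * (D * r) ≤ torusDist (M.X i ω) (M.X j ω)) :
    P.real (E ∩ (M.edge r i l ∩ M.edge r j l)) ≤
      2 * M.connProb r * M.connFun D * P.real E := by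
  set far : ℕ → Set Ω := fun a => {ω | D ≤ torusDist (M.X a ω) (M.X l ω) / r} with hfar_def
  have key (a b) (ha : 1 ≤ a) (hb : 1 ≤ b) (hab : a ≠ b) (hal : a ≠ l) (hbl : b ≠ l) :
      P.real (E ∩ M.edge r a l ∩ far b ∩ M.edge r b l) ≤
        M.connFun D * (M.connProb r * P.real E) := by
    rw [← M.measureReal_inter_edge ha hl hal hE]
    have hne := edgeIdx_ne_edgeIdx ha hb hl hab hal hbl
    have hmeas : MeasurableSet[M.sigmaOf {edgeIdx hb hl hbl}ᶜ] (E ∩ M.edge r a l ∩ far b) :=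
      ((M.sigmaOf_avoid_le hb hl hbl _ hE).inter (M.measurableSet_edge ha hl hal
        (by simp [edgeIdx]) (by simp [edgeIdx]) hne)).inter
        (measurableSet_le measurable_const ((measurable_torusDist
          (M.measurable_X hb (by simp [edgeIdx])) (M.measurable_X hl (by simp [edgeIdx]))).div_const
            r))
    exact (M.measureReal_inter_edge_le_of_le_torusDist hb hl hbl hmeas fun _ hω => hω.2).trans
      (mul_le_mul_of_nonneg_left (measureReal_mono inter_subset_left) (M.connFun_nonneg D))
  have hcover : E ∩ (M.edge r i l ∩ M.edge r j l) ⊆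
      (E ∩ M.edge r i l ∩ far j ∩ M.edge r j l) ∪ (E ∩ M.edge r j l ∩ far i ∩ M.edge r i l) := by
    rintro ω ⟨hωE, hωi, hωj⟩
    have h := (hfar ω hωE).trans (torusDist_triangle_right _ _ (M.X l ω))
    by_cases hω : ω ∈ far j
    · exact Or.inl ⟨⟨⟨hωE, hωi⟩, hω⟩, hωj⟩
    · refine Or.inr ⟨⟨⟨hωE, hωj⟩, ?_⟩, hωi⟩
      simp only [hfar_def, Set.mem_ofPred_eq, not_le, le_div_iff₀ hr] at hω ⊢
      linarith
  linarith [(measureReal_mono (μ := P) hcover).trans (measureReal_union_le _ _),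
    key i j hi hj hij hil hjl, key j i hj hi hij.symm hjl hil]

end Model

/-! ### Vertices with few neighbours -/

lemma measureReal_sdiff_union [IsFiniteMeasure P] {A B C : Set Ω} (hB : MeasurableSet B)
    (hC : MeasurableSet C) :
    P.real (A \ (B ∪ C)) =
      P.real A - P.real (A ∩ B) - P.real (A ∩ C) + P.real (A ∩ (B ∩ C)) := by
  rw [← Set.sdiff_sdiff, Set.inter_left_comm, ← Set.inter_assoc, Set.inter_comm B]
  have h₁ := measureReal_inter_add_sdiff (μ := P) (s := A) hB
  have h₂ := measureReal_inter_add_sdiff (μ := P) (s := A \ B) hC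
  have h₃ := measureReal_inter_add_sdiff (μ := P) (s := A ∩ C) hB
  have h₄ : (A \ B) ∩ C = (A ∩ C) \ B := Set.inter_sdiff_right_comm.symm
  rw [h₄] at h₂
  rw [Set.inter_right_comm]
  linarith

namespace Model

variable (M : Model d P)

open Classical in
/-- The number of vertices in `J` which satisfy the connection rule with `i` at scale `r`. -/
def neighborCount (r : ℝ) (i : ℕ) (J : Finset ℕ) (ω : Ω) : ℕ :=
  (J.filter fun l => ω ∈ M.edge r i l).card

/-- The event that `i` has fewer than `s` neighbours in `J`. -/
def fewNeighbors (r : ℝ) (i : ℕ) (J : Finset ℕ) (s : ℕ) : Set Ω :=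
  {ω | M.neighborCount r i J ω < s}

variable {M} {r D : ℝ} {i j l s t : ℕ} {J K V I : Finset ℕ} {ω : Ω} {E : Set Ω}

lemma mem_fewNeighbors : ω ∈ M.fewNeighbors r i J s ↔ M.neighborCount r i J ω < s := Iff.rfl

lemma neighborCount_mono (h : J ⊆ K) : M.neighborCount r i J ω ≤ M.neighborCount r i K ω := by
  classical exact Finset.card_le_card (Finset.filter_subset_filter _ h)

lemma fewNeighbors_anti (h : J ⊆ K) : M.fewNeighbors r i K s ⊆ M.fewNeighbors r i J s :=
  fun _ hω => (neighborCount_mono h).trans_lt hω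

lemma fewNeighbors_erase_inter_fewNeighbors_erase_subset (E : Set Ω) :
    M.fewNeighbors r i (V.erase i) s ∩ M.fewNeighbors r j (V.erase j) t ⊆
      (Eᶜ ∩ (M.fewNeighbors r i ((V.erase i).erase j) s ∩
          M.fewNeighbors r j ((V.erase i).erase j) t)) ∪
        (E ∩ M.fewNeighbors r i ((V.erase i).erase j) s) := by
  rintro ω ⟨hωi, hωj⟩
  have hωi' := fewNeighbors_anti (Finset.erase_subset j _) hωi
  have hωj' := fewNeighbors_anti (Finset.erase_subset i _) hωj
  rw [Finset.erase_right_comm] at hωj'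
  by_cases hω : ω ∈ E
  · exact Or.inr ⟨hω, hωi'⟩
  · exact Or.inl ⟨hω, hωi', hωj'⟩

lemma fewNeighbors_mono (h : s ≤ t) : M.fewNeighbors r i J s ⊆ M.fewNeighbors r i J t :=
  fun _ hω => lt_of_lt_of_le hω h

lemma fewNeighbors_zero : M.fewNeighbors r i J 0 = ∅ := by
  simp [fewNeighbors]

lemma fewNeighbors_empty_succ : M.fewNeighbors r i ∅ (s + 1) = Set.univ := by
  simp [fewNeighbors, neighborCount]

lemma fewNeighbors_insert_succ (hl : l ∉ J) :
    M.fewNeighbors r i (insert l J) (s + 1) =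
      (M.fewNeighbors r i J s ∩ M.edge r i l) ∪
        (M.fewNeighbors r i J (s + 1) \ M.edge r i l) := by
  ext ω
  by_cases h : ω ∈ M.edge r i l <;>
    simp [mem_fewNeighbors, neighborCount, Finset.filter_insert, h, hl]

lemma measurableSet_sigmaOf_avoid_fewNeighbors (hi : 1 ≤ i) (hil : i ≠ l) (hJ : ∀ j ∈ J, 1 ≤ j)
    (hiJ : i ∉ J) (hlJ : l ∉ J) :
    MeasurableSet[M.sigmaOf (avoid l)] (M.fewNeighbors r i J s) := by
  have hcount : Measurable[M.sigmaOf (avoid l)] fun ω => M.neighborCount r i J ω := by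
    simp_rw [neighborCount, Finset.card_filter]
    refine Finset.measurable_sum _ fun j hj => ?_
    have hij : i ≠ j := fun h => hiJ (h ▸ hj)
    have hjl : j ≠ l := fun h => hlJ (h ▸ hj)
    exact Measurable.ite (M.measurableSet_edge hi (hJ j hj) hij hil hjl
      (edgeIdx_mem_avoid hi (hJ j hj) hij hil hjl)) measurable_const measurable_const
  exact hcount measurableSet_Iio

lemma measurableSet_fewNeighbors (hi : 1 ≤ i) (hJ : ∀ j ∈ J, 1 ≤ j) (hiJ : i ∉ J) :
    MeasurableSet (M.fewNeighbors r i J s) := by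
  obtain ⟨l, hl⟩ := Infinite.exists_notMem_finset (insert i J)
  simp only [Finset.mem_insert, not_or] at hl
  exact M.sigmaOf_le _ _ (measurableSet_sigmaOf_avoid_fewNeighbors hi (Ne.symm hl.1) hJ hiJ hl.2)

variable [IsProbabilityMeasure P]

lemma measureReal_inter_fewNeighbors (hi : 1 ≤ i) (hJ : ∀ j ∈ J, 1 ≤ j) (hiJ : i ∉ J)
    (hE : ∀ l ∈ J, MeasurableSet[M.sigmaOf (avoid l)] E) :
    P.real (E ∩ M.fewNeighbors r i J s) =
      binomialLowerTail J.card (M.connProb r) s * P.real E := by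
  induction J using Finset.induction_on generalizing s with
  | empty => cases s <;> simp [fewNeighbors_zero, fewNeighbors_empty_succ,
      binomialLowerTail_zero_left, binomialLowerTail_zero_right]
  | insert l J hl ih =>
    simp only [Finset.mem_insert, forall_eq_or_imp, not_or] at hJ hiJ hE
    cases s with
    | zero => simp [fewNeighbors_zero, binomialLowerTail_zero_right]
    | succ s =>
      have hmeas (t : ℕ) : MeasurableSet[M.sigmaOf (avoid l)] (E ∩ M.fewNeighbors r i J t) :=
        hE.1.inter (measurableSet_sigmaOf_avoid_fewNeighbors hi hiJ.1 hJ.2 hiJ.2 hl)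
      have hedge : MeasurableSet (M.edge r i l) :=
        M.sigmaOf_le univ _ (M.measurableSet_edge hi hJ.1 hiJ.1 trivial trivial trivial)
      have split := measureReal_inter_add_sdiff (μ := P)
        (s := E ∩ M.fewNeighbors r i J (s + 1)) hedge
      rw [M.measureReal_inter_edge hi hJ.1 hiJ.1 (hmeas _)] at split
      rw [fewNeighbors_insert_succ hl, Set.inter_union_distrib_left, ← Set.inter_assoc,
        ← Set.inter_sdiff_assoc, measureReal_union
          (Set.disjoint_sdiff_right.mono_left Set.inter_subset_right)
          ((M.sigmaOf_le _ _ (hmeas _)).diff hedge),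
        M.measureReal_inter_edge hi hJ.1 hiJ.1 (hmeas _), Finset.card_insert_of_notMem hl,
        binomialLowerTail_succ_succ, ih hJ.2 hiJ.2 hE.2]
      rw [ih hJ.2 hiJ.2 hE.2] at split
      linear_combination split

lemma measureReal_fewNeighbors (hi : 1 ≤ i) (hJ : ∀ j ∈ J, 1 ≤ j) (hiJ : i ∉ J) :
    P.real (M.fewNeighbors r i J s) = binomialLowerTail J.card (M.connProb r) s := by
  have h := measureReal_inter_fewNeighbors (M := M) (r := r) (s := s) hi hJ hiJ
    fun _ _ => MeasurableSet.univ
  rwa [Set.univ_inter, probReal_univ, mul_one] at h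

lemma measureReal_inter_fewNeighbors_insert_le (hr : 0 < r) (hi : 1 ≤ i) (hj : 1 ≤ j)
    (hl : 1 ≤ l) (hij : i ≠ j) (hil : i ≠ l) (hjl : j ≠ l) (hJ : ∀ j ∈ J, 1 ≤ j) (hiJ : i ∉ J)
    (hjJ : j ∉ J) (hlJ : l ∉ J) (hE : MeasurableSet[M.sigmaOf (avoid l)] E)
    (hfar : ∀ ω ∈ E, 2 * (D * r) ≤ torusDist (M.X i ω) (M.X j ω)) :
    P.real (E ∩ (M.fewNeighbors r i (insert l J) (s + 1) ∩
        M.fewNeighbors r j (insert l J) (t + 1))) ≤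
      M.connProb r * (P.real (E ∩ (M.fewNeighbors r i J s ∩ M.fewNeighbors r j J (t + 1))) +
        P.real (E ∩ (M.fewNeighbors r i J (s + 1) ∩ M.fewNeighbors r j J t))) +
      (1 - 2 * M.connProb r + 2 * M.connProb r * M.connFun D) *
        P.real (E ∩ (M.fewNeighbors r i J (s + 1) ∩ M.fewNeighbors r j J (t + 1))) := by
  set A : ℕ → ℕ → Set Ω := fun a b => E ∩ (M.fewNeighbors r i J a ∩ M.fewNeighbors r j J b)
  have hA (a b : ℕ) : MeasurableSet[M.sigmaOf (avoid l)] (A a b) :=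
    hE.inter ((measurableSet_sigmaOf_avoid_fewNeighbors hi hil hJ hiJ hlJ).inter
      (measurableSet_sigmaOf_avoid_fewNeighbors hj hjl hJ hjJ hlJ))
  have hedge {a : ℕ} (ha : 1 ≤ a) (hal : a ≠ l) : MeasurableSet (M.edge r a l) :=
    M.sigmaOf_le univ _ (M.measurableSet_edge ha hl hal trivial trivial trivial)
  have hcover : E ∩ (M.fewNeighbors r i (insert l J) (s + 1) ∩
      M.fewNeighbors r j (insert l J) (t + 1)) ⊆
      (A s (t + 1) ∩ M.edge r i l ∪ A (s + 1) t ∩ M.edge r j l) ∪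
        A (s + 1) (t + 1) \ (M.edge r i l ∪ M.edge r j l) := by
    rw [fewNeighbors_insert_succ hlJ, fewNeighbors_insert_succ hlJ]
    rintro ω ⟨hω, ⟨hs, hsl⟩ | ⟨hs, hsl⟩, ⟨ht, htl⟩ | ⟨ht, htl⟩⟩
    · exact Or.inl (Or.inl ⟨⟨hω, hs, fewNeighbors_mono t.le_succ ht⟩, hsl⟩)
    · exact Or.inl (Or.inl ⟨⟨hω, hs, ht⟩, hsl⟩)
    · exact Or.inl (Or.inr ⟨⟨hω, hs, ht⟩, htl⟩)
    · exact Or.inr ⟨⟨hω, hs, ht⟩, not_or.2 ⟨hsl, htl⟩⟩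
  calc _ ≤ P.real (A s (t + 1) ∩ M.edge r i l) + P.real (A (s + 1) t ∩ M.edge r j l) +
        P.real (A (s + 1) (t + 1) \ (M.edge r i l ∪ M.edge r j l)) :=
        (measureReal_mono (μ := P) hcover).trans ((measureReal_union_le _ _).trans
          (add_le_add_left (measureReal_union_le _ _) _))
    _ ≤ _ := by
        rw [measureReal_sdiff_union (hedge hi hil) (hedge hj hjl)]
        simp only [M.measureReal_inter_edge hi hl hil (hA _ _),
          M.measureReal_inter_edge hj hl hjl (hA _ _)]
        linarith [M.measureReal_inter_edge_inter_edge_le hr hi hj hl hij hil hjl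
          (hA (s + 1) (t + 1)) (D := D) fun ω hω => hfar ω hω.1]

lemma measureReal_inter_fewNeighbors_inter_fewNeighbors_le (hr : 0 < r)
    (hp : M.connProb r ≤ 1 / 2) (hi : 1 ≤ i) (hj : 1 ≤ j) (hij : i ≠ j) (hJ : ∀ j ∈ J, 1 ≤ j)
    (hiJ : i ∉ J) (hjJ : j ∉ J) (hE : ∀ l ∈ J, MeasurableSet[M.sigmaOf (avoid l)] E)
    (hfar : ∀ ω ∈ E, 2 * (D * r) ≤ torusDist (M.X i ω) (M.X j ω)) :
    P.real (E ∩ (M.fewNeighbors r i J s ∩ M.fewNeighbors r j J t)) ≤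
      (1 + 2 * M.connProb r * M.connFun D / (1 - M.connProb r) ^ 2) ^ J.card *
        (binomialLowerTail J.card (M.connProb r) s * binomialLowerTail J.card (M.connProb r) t) *
        P.real E := by
  have hp₀ := M.connProb_nonneg r
  have he : 0 ≤ 2 * M.connProb r * M.connFun D := by have := M.connFun_nonneg D; positivity
  induction J using Finset.induction_on generalizing s t with
  | empty => cases s <;> cases t <;> simp [fewNeighbors_zero, fewNeighbors_empty_succ,
      binomialLowerTail_zero_left, binomialLowerTail_zero_right]
  | insert l J hl ih =>
    simp only [Finset.mem_insert, forall_eq_or_imp, not_or] at hJ hiJ hjJ hE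
    rcases s with _ | s
    · simp [fewNeighbors_zero, binomialLowerTail_zero_right]
    rcases t with _ | t
    · simp [fewNeighbors_zero, binomialLowerTail_zero_right]
    rw [Finset.card_insert_of_notMem hl, pow_succ]
    have IH (a b : ℕ) := ih (s := a) (t := b) hJ.2 hiJ.2 hjJ.2 hE.2
    set c := (1 + 2 * M.connProb r * M.connFun D / (1 - M.connProb r) ^ 2) ^ J.card * P.real E
    have hc : 0 ≤ c := by positivity
    have step := binomialLowerTail_mul_binomialLowerTail_step_le (m := J.card) (s := s) hp₀
      (by linarith) he t
    refine (measureReal_inter_fewNeighbors_insert_le hr hi hj hJ.1 hij hiJ.1 hjJ.1 hJ.2 hiJ.2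
      hjJ.2 hl hE.1 hfar).trans ?_
    refine (add_le_add (mul_le_mul_of_nonneg_left (add_le_add (IH s (t + 1)) (IH (s + 1) t)) hp₀)
      (mul_le_mul_of_nonneg_left (IH (s + 1) (t + 1)) (by linarith))).trans ?_
    linear_combination mul_le_mul_of_nonneg_left step hc

end Model

lemma one_add_pow_div_one_sub_sq_le_exp {p w : ℝ} (hp₀ : 0 ≤ p) (hp : p ≤ 1 / 2) (hw : 0 ≤ w)
    (k : ℕ) :
    (1 + 2 * p * w / (1 - p) ^ 2) ^ k / (1 - p) ^ 2 ≤ Real.exp (8 * (k * p) * w + 4 * p) := by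
  have hq : 0 < 1 - p := by linarith
  have base : 1 + 2 * p * w / (1 - p) ^ 2 ≤ Real.exp (8 * p * w) := calc
    _ ≤ 1 + 8 * p * w := by
        gcongr
        rw [div_le_iff₀ (by positivity)]
        nlinarith [mul_nonneg hp₀ hw, mul_nonneg (mul_nonneg hp₀ hw)
          (show 0 ≤ (1 - p) ^ 2 - 1 / 4 by nlinarith)]
    _ ≤ _ := by linarith [Real.add_one_le_exp (8 * p * w)]
  have inv : 1 / (1 - p) ≤ Real.exp (2 * p) := calc
    _ ≤ 1 + 2 * p := by
        rw [div_le_iff₀ hq]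
        nlinarith
    _ ≤ _ := by linarith [Real.add_one_le_exp (2 * p)]
  calc _ = (1 + 2 * p * w / (1 - p) ^ 2) ^ k * (1 / (1 - p)) ^ 2 := by
        rw [one_div_pow, mul_one_div]
    _ ≤ Real.exp (8 * p * w) ^ k * Real.exp (2 * p) ^ 2 := by gcongr
    _ = _ := by
        rw [← Real.exp_nat_mul, ← Real.exp_nat_mul, ← Real.exp_add]
        push_cast
        ring_nf

namespace Model

variable {M : Model d P} [IsProbabilityMeasure P] {r D : ℝ} {i j s t : ℕ} {J V I : Finset ℕ}
  {E : Set Ω}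

lemma measureReal_inter_fewNeighbors_inter_fewNeighbors_le_exp (hr : 0 < r)
    (hp : M.connProb r ≤ 1 / 2) (hi : 1 ≤ i) (hj : 1 ≤ j) (hij : i ≠ j) (hJ : ∀ j ∈ J, 1 ≤ j)
    (hiJ : i ∉ J) (hjJ : j ∉ J) (hE : ∀ l ∈ J, MeasurableSet[M.sigmaOf (avoid l)] E)
    (hfar : ∀ ω ∈ E, 2 * (D * r) ≤ torusDist (M.X i ω) (M.X j ω)) :
    P.real (E ∩ (M.fewNeighbors r i J s ∩ M.fewNeighbors r j J t)) ≤
      Real.exp (8 * (J.card * M.connProb r) * M.connFun D + 4 * M.connProb r) *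
        (binomialLowerTail (J.card + 1) (M.connProb r) s *
          binomialLowerTail (J.card + 1) (M.connProb r) t) := by
  set p := M.connProb r
  have hp₀ : 0 ≤ p := M.connProb_nonneg r
  have hw := M.connFun_nonneg D
  have hF (m u : ℕ) : 0 ≤ binomialLowerTail m p u := binomialLowerTail_nonneg hp₀ (by linarith)
  have hF' (u : ℕ) : (1 - p) * binomialLowerTail J.card p u ≤ binomialLowerTail (J.card + 1) p u :=
    one_sub_mul_binomialLowerTail_le hp₀ (by linarith)
  have hq : 0 < 1 - p := by linarith
  have hK : 0 ≤ (1 + 2 * p * M.connFun D / (1 - p) ^ 2) ^ J.card := by positivity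
  calc _ ≤ (1 + 2 * p * M.connFun D / (1 - p) ^ 2) ^ J.card *
        (binomialLowerTail J.card p s * binomialLowerTail J.card p t) * P.real E :=
        measureReal_inter_fewNeighbors_inter_fewNeighbors_le hr hp hi hj hij hJ hiJ hjJ hE hfar
    _ ≤ (1 + 2 * p * M.connFun D / (1 - p) ^ 2) ^ J.card *
        (binomialLowerTail J.card p s * binomialLowerTail J.card p t) :=
        mul_le_of_le_one_right (mul_nonneg hK (mul_nonneg (hF _ _) (hF _ _))) measureReal_le_one
    _ = (1 + 2 * p * M.connFun D / (1 - p) ^ 2) ^ J.card / (1 - p) ^ 2 *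
        (((1 - p) * binomialLowerTail J.card p s) * ((1 - p) * binomialLowerTail J.card p t)) := by
        field_simp
    _ ≤ _ := mul_le_mul (one_add_pow_div_one_sub_sq_le_exp hp₀ hp hw _)
        (mul_le_mul (hF' s) (hF' t) (mul_nonneg hq.le (hF _ _)) (hF _ _))
        (mul_nonneg (mul_nonneg hq.le (hF _ _)) (mul_nonneg hq.le (hF _ _))) (Real.exp_pos _).le

/-- Vertices at distance less than `2 * (D * r)` are rare, and the neighbourhoods of the others are
almost independent. -/
lemma measureReal_fewNeighbors_erase_inter_le (hr : 0 < r) (hD : 0 < D)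
    (hp : M.connProb r ≤ 1 / 2) (hV : ∀ j ∈ V, 1 ≤ j) (hi : i ∈ V) (hj : j ∈ V) (hij : i ≠ j) :
    P.real (M.fewNeighbors r i (V.erase i) s ∩ M.fewNeighbors r j (V.erase j) s) ≤
      Real.exp (8 * (V.card * M.connProb r) * M.connFun D + 4 * M.connProb r) *
        binomialLowerTail (V.card - 1) (M.connProb r) s ^ 2 +
      2 * ((2 * (D * r)) ^ d * volume.real (Metric.ball (0 : EuclideanSpace ℝ (Fin d)) 1)) *
        binomialLowerTail (V.card - 1) (M.connProb r) s := by
  set p := M.connProb r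
  set a := binomialLowerTail (V.card - 1) p s
  set W := (V.erase i).erase j with hW
  set f := binomialLowerTail W.card p s
  set near : Set Ω := {ω | torusDist (M.X i ω) (M.X j ω) < 2 * (D * r)}
  have hp₀ : 0 ≤ p := M.connProb_nonneg r
  have hw := M.connFun_nonneg D
  have hf : 0 ≤ f := binomialLowerTail_nonneg hp₀ (by linarith)
  have hcard : W.card + 1 = V.card - 1 := by
    rw [hW, Finset.card_erase_add_one (Finset.mem_erase.2 ⟨hij.symm, hj⟩),
      Finset.card_erase_of_mem hi]
  have hfa : (1 - p) * f ≤ a := by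
    simpa only [hcard] using one_sub_mul_binomialLowerTail_le (m := W.card) hp₀ (by linarith)
  have hWV (l) (hl : l ∈ W) : 1 ≤ l := hV l (Finset.mem_of_mem_erase (Finset.mem_of_mem_erase hl))
  have hiW : i ∉ W := by simp [hW]
  have hjW : j ∉ W := by simp [hW]
  have hmeas (l) (hl : l ∈ W) : MeasurableSet[M.sigmaOf (avoid l)] near :=
    measurableSet_lt (mδ := M.sigmaOf (avoid l)) (measurable_torusDist
      (M.measurable_X (hV i hi) (ne_of_mem_of_not_mem hl hiW).symm)
      (M.measurable_X (hV j hj) (ne_of_mem_of_not_mem hl hjW).symm)) measurable_const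
  have hfar : P.real (nearᶜ ∩ (M.fewNeighbors r i W s ∩ M.fewNeighbors r j W s)) ≤
      Real.exp (8 * (V.card * p) * M.connFun D + 4 * p) * a ^ 2 := by
    have h := measureReal_inter_fewNeighbors_inter_fewNeighbors_le_exp (s := s) (t := s) hr hp
      (hV i hi) (hV j hj) hij hWV hiW hjW (fun l hl => (hmeas l hl).compl)
      fun ω hω => not_lt.1 hω
    rw [hcard, ← sq] at h
    refine h.trans ?_
    gcongr
    exact (Finset.erase_subset _ _).trans (Finset.erase_subset _ _)
  have hclose : P.real (near ∩ M.fewNeighbors r i W s) ≤ 2 *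
      ((2 * (D * r)) ^ d * volume.real (Metric.ball (0 : EuclideanSpace ℝ (Fin d)) 1)) * a := by
    rw [measureReal_inter_fewNeighbors (hV i hi) hWV hiW hmeas]
    have hv := M.measureReal_torusDist_lt_le (R := 2 * (D * r)) (by positivity) (hV i hi)
      (hV j hj) hij
    calc f * P.real near ≤ (2 * a) * _ :=
          mul_le_mul (by nlinarith) hv measureReal_nonneg (by nlinarith)
      _ = _ := by ring
  exact (measureReal_mono (μ := P) (fewNeighbors_erase_inter_fewNeighbors_erase_subset near)).trans
    ((measureReal_union_le _ _).trans (add_le_add hfar hclose))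

lemma measureReal_forall_notMem_fewNeighbors_le (hr : 0 < r) (hD : 0 < D)
    (hp : M.connProb r ≤ 1 / 2) (hV : ∀ j ∈ V, 1 ≤ j) (hIV : I ⊆ V) (hI : I.Nonempty)
    (ha : 0 < binomialLowerTail (V.card - 1) (M.connProb r) s) :
    P.real {ω | ∀ i ∈ I, ω ∉ M.fewNeighbors r i (V.erase i) s} ≤
      1 / (I.card * binomialLowerTail (V.card - 1) (M.connProb r) s) +
      (Real.exp (8 * (V.card * M.connProb r) * M.connFun D + 4 * M.connProb r) - 1) +
      2 * ((2 * (D * r)) ^ d * volume.real (Metric.ball (0 : EuclideanSpace ℝ (Fin d)) 1)) /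
        binomialLowerTail (V.card - 1) (M.connProb r) s := by
  have hV' (i) : ∀ j ∈ V.erase i, 1 ≤ j := fun j hj => hV j (Finset.mem_of_mem_erase hj)
  have hsingle (i) (hi : i ∈ I) : P.real (M.fewNeighbors r i (V.erase i) s) =
      binomialLowerTail (V.card - 1) (M.connProb r) s := by
    rw [measureReal_fewNeighbors (hV i (hIV hi)) (hV' i) (Finset.notMem_erase i V),
      Finset.card_erase_of_mem (hIV hi)]
  set a := binomialLowerTail (V.card - 1) (M.connProb r) s
  set E := Real.exp (8 * (V.card * M.connProb r) * M.connFun D + 4 * M.connProb r)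
  set v := (2 * (D * r)) ^ d * volume.real (Metric.ball (0 : EuclideanSpace ℝ (Fin d)) 1)
  have : 0 ≤ v := by positivity
  have : 0 < E := Real.exp_pos _
  have hpair (i) (hi : i ∈ I) (j) (hj : j ∈ I) :
      P.real (M.fewNeighbors r i (V.erase i) s ∩ M.fewNeighbors r j (V.erase j) s) ≤
        (if i = j then a else 0) + (E * a ^ 2 + 2 * v * a) := by
    split_ifs with hij
    · subst hij
      rw [Set.inter_self, hsingle i hi]
      exact le_add_of_nonneg_right (by positivity)
    · rw [zero_add]
      exact measureReal_fewNeighbors_erase_inter_le hr hD hp hV (hIV hi) (hIV hj) hij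
  have hsum : ∑ i ∈ I, P.real (M.fewNeighbors r i (V.erase i) s) = I.card * a := by
    rw [Finset.sum_congr rfl hsingle, Finset.sum_const, nsmul_eq_mul]
  have : (0 : ℝ) < I.card := by exact_mod_cast hI.card_pos
  have h := measureReal_forall_notMem_le (P := P) (fun i hi => measurableSet_fewNeighbors (M := M)
    (r := r) (s := s) (hV i (hIV hi)) (hV' i) (Finset.notMem_erase i V)) (hsum ▸ by positivity)
  rw [hsum] at h
  calc _ ≤ _ := h
    _ ≤ (∑ i ∈ I, ∑ j ∈ I, ((if i = j then a else 0) + (E * a ^ 2 + 2 * v * a))) /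
          (I.card * a) ^ 2 - 1 := by
        gcongr with i hi j hj
        exact hpair i hi j hj
    _ = (I.card * (a + I.card * (E * a ^ 2 + 2 * v * a))) / (I.card * a) ^ 2 - 1 := by
        congr 2
        rw [Finset.sum_congr rfl fun i hi => by
          rw [Finset.sum_add_distrib, Finset.sum_ite_eq, if_pos hi, Finset.sum_const,
            nsmul_eq_mul]]
        rw [Finset.sum_const, nsmul_eq_mul]
    _ = _ := by
        field_simp
        ring

end Model

/-! ### Degrees -/

namespace Model

lemma hasLaw_N (M : Model d P) (n : ℕ) : HasLaw (M.N n) (poissonMeasure n) P where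
  aemeasurable := (M.N_meas n).aemeasurable
  map_eq := Measure.ext_of_singleton fun k => by
    rw [Measure.map_apply (M.N_meas n) (measurableSet_singleton k), poissonMeasure_singleton]
    simp only [NNReal.coe_natCast]
    exact M.N_poisson n k

variable {M : Model d P} {n i j s : ℕ} {r r' : ℝ} {ω : Ω} {J : Finset ℕ}

lemma edge_subset_edge (hr : 0 < r) (hrr' : r ≤ r') : M.edge r i j ⊆ M.edge r' i j := fun _ hω =>
  hω.trans <| M.antitone_connFun <| div_le_div_of_nonneg_left (torusDist_nonneg _ _) hr hrr'

lemma adj_iff_mem_edge (hr : 0 < r) : adj M n r ω i j ↔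
    i ≠ j ∧ 1 ≤ i ∧ 1 ≤ j ∧ i ≤ M.N n ω ∧ j ≤ M.N n ω ∧ ω ∈ M.edge r i j := by
  rw [adj, edge, mem_ofPred_eq, edgeVar,
    connFun_of_nonneg _ (div_nonneg (torusDist_nonneg _ _) hr.le)]

lemma finite_setOf_adj : {j | adj M n r ω i j}.Finite :=
  (Set.finite_Icc 1 (M.N n ω)).subset fun _ hj => ⟨hj.2.2.1, hj.2.2.2.2.1⟩

lemma neighborCount_le_deg (hr : 0 < r) (hrr' : r ≤ r') (hi : i ∈ Finset.Icc 1 (M.N n ω))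
    (hJ : J ⊆ (Finset.Icc 1 (M.N n ω)).erase i) : M.neighborCount r i J ω ≤ deg M n r' ω i := by
  classical
  rw [neighborCount, deg, ← Set.ncard_coe_finset]
  refine Set.ncard_le_ncard (fun j hj => ?_) finite_setOf_adj
  rw [Finset.mem_coe, Finset.mem_filter] at hj
  obtain ⟨hji, hjN⟩ := Finset.mem_erase.1 (hJ hj.1)
  rw [Finset.mem_Icc] at hi hjN
  exact (adj_iff_mem_edge (hr.trans_le hrr')).2
    ⟨hji.symm, hi.1, hjN.1, hi.2, hjN.2, edge_subset_edge hr hrr' hj.2⟩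

lemma deg_le_neighborCount (hr : 0 < r) (hrr' : r ≤ r')
    (hJ : (Finset.Icc 1 (M.N n ω)).erase i ⊆ J) : deg M n r ω i ≤ M.neighborCount r' i J ω := by
  classical
  rw [neighborCount, deg, ← Set.ncard_coe_finset]
  refine Set.ncard_le_ncard (fun j hj => ?_) (Finset.finite_toSet _)
  obtain ⟨hij, -, hj, -, hjN, hedge⟩ := (adj_iff_mem_edge hr).1 hj
  rw [Finset.mem_coe, Finset.mem_filter]
  exact ⟨hJ (Finset.mem_erase.2 ⟨hij.symm, Finset.mem_Icc.2 ⟨hj, hjN⟩⟩),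
    edge_subset_edge hr hrr' hedge⟩

lemma le_minDeg (hN : 1 ≤ M.N n ω) (h : ∀ i ∈ Finset.Icc 1 (M.N n ω), s ≤ deg M n r ω i) :
    s ≤ minDeg M n r ω := by
  obtain ⟨i, h₁, h₂, hdeg⟩ := Nat.sInf_mem
    (s := {k | ∃ i, 1 ≤ i ∧ i ≤ M.N n ω ∧ deg M n r ω i = k}) ⟨_, 1, le_rfl, hN, rfl⟩
  exact (h i (Finset.mem_Icc.2 ⟨h₁, h₂⟩)).trans_eq hdeg

lemma minDeg_le_deg (hi : i ∈ Finset.Icc 1 (M.N n ω)) : minDeg M n r ω ≤ deg M n r ω i :=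
  Nat.sInf_le ⟨i, (Finset.mem_Icc.1 hi).1, (Finset.mem_Icc.1 hi).2, rfl⟩

lemma le_minDeg_of_forall_notMem_fewNeighbors {k m : ℕ} (hr : 0 < r) (hrr' : r ≤ r')
    (hN : M.N n ω ∈ Icc k m) (hN₀ : 1 ≤ M.N n ω)
    (h : ∀ i ∈ Finset.Icc 1 m, ω ∉ M.fewNeighbors r i ((Finset.Icc 1 k).erase i) s) :
    s ≤ minDeg M n r' ω :=
  le_minDeg hN₀ fun i hi => (not_lt.1 (h i (Finset.Icc_subset_Icc_right hN.2 hi))).trans <|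
    neighborCount_le_deg hr hrr' hi <| Finset.erase_subset_erase i <|
      Finset.Icc_subset_Icc_right hN.1

lemma minDeg_lt_of_mem_fewNeighbors {k : ℕ} (hr : 0 < r) (hrr' : r ≤ r')
    (hi : i ∈ Finset.Icc 1 (M.N n ω)) (hN : M.N n ω ≤ k)
    (h : ω ∈ M.fewNeighbors r' i ((Finset.Icc 1 k).erase i) s) : minDeg M n r ω < s :=
  (minDeg_le_deg hi).trans_lt <| (deg_le_neighborCount hr hrr' <| Finset.erase_subset_erase i <|
    Finset.Icc_subset_Icc_right hN).trans_lt h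

end Model

/-! ### Geometric subsequences -/

lemma eventually_exists_pow_ge {ρ : ℝ} (hρ : 1 < ρ) {Q : ℝ → Prop}
    (h : ∀ᶠ k : ℕ in atTop, Q (ρ ^ k)) :
    ∀ᶠ t : ℝ in atTop, ∃ x, Q x ∧ t ≤ x ∧ x ≤ ρ * t := by
  obtain ⟨K, hK⟩ := eventually_atTop.1 h
  filter_upwards [eventually_ge_atTop 1, eventually_ge_atTop (ρ ^ K)] with t ht htK
  obtain ⟨k, hk, hk'⟩ := exists_nat_pow_near ht hρ
  refine ⟨ρ ^ (k + 1), hK _ ((pow_lt_pow_iff_right₀ hρ).1 (htK.trans_lt hk')).le, hk'.le, ?_⟩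
  rw [pow_succ']
  gcongr

lemma eventually_exists_pow_le {ρ : ℝ} (hρ : 1 < ρ) {Q : ℝ → Prop}
    (h : ∀ᶠ k : ℕ in atTop, Q (ρ ^ k)) :
    ∀ᶠ t : ℝ in atTop, ∃ x, Q x ∧ x ≤ t ∧ t ≤ ρ * x := by
  obtain ⟨K, hK⟩ := eventually_atTop.1 h
  filter_upwards [eventually_ge_atTop 1, eventually_ge_atTop (ρ ^ K)] with t ht htK
  obtain ⟨k, hk, hk'⟩ := exists_nat_pow_near ht hρ
  exact ⟨ρ ^ k, hK _ (Nat.lt_succ_iff.1 ((pow_lt_pow_iff_right₀ hρ).1 (htK.trans_lt hk'))), hk,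
    by simpa only [pow_succ'] using hk'.le⟩

section

variable [IsFiniteMeasure P] {B : ℝ → Set Ω} {ε ρ : ℝ}

lemma ae_eventually_exists_notMem_ge (hε : 0 < ε) (hρ : 1 < ρ)
    (h : (fun x => P.real (B x)) =O[atTop] fun x => x ^ (-ε)) :
    ∀ᵐ ω ∂P, ∀ᶠ t : ℝ in atTop, ∃ x, ω ∉ B x ∧ t ≤ x ∧ x ≤ ρ * t := by
  filter_upwards [ae_eventually_notMem_pow hε hρ h] with ω hω
  exact eventually_exists_pow_ge (Q := fun x => ω ∉ B x) hρ hω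

lemma ae_eventually_exists_notMem_le (hε : 0 < ε) (hρ : 1 < ρ)
    (h : (fun x => P.real (B x)) =O[atTop] fun x => x ^ (-ε)) :
    ∀ᵐ ω ∂P, ∀ᶠ t : ℝ in atTop, ∃ x, ω ∉ B x ∧ x ≤ t ∧ t ≤ ρ * x := by
  filter_upwards [ae_eventually_notMem_pow hε hρ h] with ω hω
  exact eventually_exists_pow_le (Q := fun x => ω ∉ B x) hρ hω

end

/-! ### The lower bound -/

lemma continuousAt_mul_mul_H_div (γ b : ℝ) : ContinuousAt (fun c => γ * c * H (b / c)) 1 :=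
  (continuousAt_const.mul continuousAt_id).mul <|
    continuous_H.continuousAt.comp <| continuousAt_const.div continuousAt_id one_ne_zero

lemma eventually_one_lt_mul_mul_H_div {γ b : ℝ} (hγ : 0 < γ) (h : 1 / γ < H b) :
    ∀ᶠ c in nhds 1, 1 < γ * c * H (b / c) :=
  (continuousAt_mul_mul_H_div γ b).eventually_const_lt (by simpa using (div_lt_iff₀' hγ).1 h)

namespace Model

variable [IsProbabilityMeasure P] {M : Model d P} {r γ b c C κ : ℝ} {i m s : ℕ} {I J K : Finset ℕ}

lemma measureReal_fewNeighbors_le (hi : 1 ≤ i) (hJ : ∀ j ∈ J, 1 ≤ j) (hiJ : i ∉ J)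
    (hm : m ≤ J.card) :
    P.real (M.fewNeighbors r i J s) ≤ binomialLowerTail m (M.connProb r) s := by
  obtain ⟨T, hT, rfl⟩ := Finset.exists_subset_card_eq hm
  rw [← measureReal_fewNeighbors hi (fun j hj => hJ j (hT hj)) fun hiT => hiJ (hT hiT)]
  exact measureReal_mono (fewNeighbors_anti hT)

lemma measureReal_exists_mem_fewNeighbors_le (hI : ∀ i ∈ I, 1 ≤ i) (hK : ∀ j ∈ K, 1 ≤ j) :
    P.real {ω | ∃ i ∈ I, ω ∈ M.fewNeighbors r i (K.erase i) s} ≤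
      I.card * binomialLowerTail (K.card - 1) (M.connProb r) s := by
  have hunion : {ω | ∃ i ∈ I, ω ∈ M.fewNeighbors r i (K.erase i) s} =
      ⋃ i ∈ I, M.fewNeighbors r i (K.erase i) s := by
    ext
    simp
  rw [hunion, ← nsmul_eq_mul, ← Finset.sum_const]
  exact (measureReal_biUnion_finset_le _ _).trans <| Finset.sum_le_sum fun i hi =>
    measureReal_fewNeighbors_le (hI i hi) (fun j hj => hK j (Finset.mem_of_mem_erase hj))
      (Finset.notMem_erase i K) Finset.pred_card_le_card_erase

lemma isBigO_measureReal_exists_mem_fewNeighbors (hd : d ≠ 0) (hγ : 0 < γ) (hb : 0 < b)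
    (hbc : b ≤ c) (hC : 0 ≤ C) (hκ : κ < γ * c * H (b / c)) :
    (fun x : ℝ => P.real {ω | ∃ i ∈ Finset.Icc 1 ⌊C * x⌋₊, ω ∈ M.fewNeighbors (M.scale γ x) i
      ((Finset.Icc 1 ⌊c * x⌋₊).erase i) ⌈γ * b * Real.log x⌉₊}) =O[atTop]
        fun x => x ^ (-(κ - 1)) := by
  refine .of_bound C ?_
  have hc := hb.trans_le hbc
  rw [← mul_div_mul_left b c hγ.ne'] at hκ
  filter_upwards [eventually_gt_atTop 0, eventually_binomialLowerTail_le Real.tendsto_log_atTop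
    (M.tendsto_connProb_scale hd hγ) (M.tendsto_natFloor_mul_sub_one_mul_connProb_scale hd hγ hc)
    (mul_pos hγ hb) (mul_le_mul_of_nonneg_left hbc hγ.le) hκ] with x hx hbin
  rw [Real.norm_of_nonneg measureReal_nonneg, Real.norm_of_nonneg (by positivity)]
  have hpos (m : ℕ) : ∀ i ∈ Finset.Icc 1 m, 1 ≤ i := fun _ hi => (Finset.mem_Icc.1 hi).1
  calc _ ≤ ⌊C * x⌋₊ * binomialLowerTail (⌊c * x⌋₊ - 1) (M.connProb (M.scale γ x))
        ⌈γ * b * Real.log x⌉₊ := by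
        simpa using measureReal_exists_mem_fewNeighbors_le (M := M) (hpos _) (hpos ⌊c * x⌋₊)
    _ ≤ C * x * Real.exp (-(κ * Real.log x)) :=
        mul_le_mul (Nat.floor_le (by positivity)) hbin (binomialLowerTail_nonneg
          (M.connProb_nonneg _) M.connProb_le_one) (by positivity)
    _ = C * x ^ (-(κ - 1)) := by
        rw [Real.rpow_def_of_pos hx, mul_assoc]
        nth_rewrite 1 [← Real.exp_log hx]
        rw [← Real.exp_add]
        ring_nf

lemma ae_eventually_le_minDeg (hd : d ≠ 0) (hγ : 0 < γ) (hb₀ : 0 < b) (hb₁ : b < 1)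
    (h : 1 / γ < H b) :
    ∀ᵐ ω ∂P, ∀ᶠ n : ℕ in atTop, γ * b * Real.log n ≤ minDeg M n (rhat M γ n) ω := by
  have hsq : Tendsto (fun η : ℝ => (1 - η) ^ 2) (nhdsWithin 0 (Ioi 0)) (nhds 1) :=
    ((continuous_const.sub continuous_id).pow 2).tendsto' _ _ (by simp) |>.mono_left
      nhdsWithin_le_nhds
  obtain ⟨η, ⟨hκ, hbη⟩, hη₀, hη₁⟩ := ((hsq.eventually ((eventually_one_lt_mul_mul_H_div hγ h).and
    (eventually_ge_nhds hb₁))).and (Ioo_mem_nhdsGT one_pos)).exists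
  obtain ⟨κ, hκ₁, hκ⟩ := exists_between hκ
  have hη : 0 < 1 - η := sub_pos.2 hη₁
  have hρ : 1 < (1 - η)⁻¹ := (one_lt_inv₀ hη).2 (by linarith)
  filter_upwards [ae_eventually_poisson_mem_Icc M.hasLaw_N hη₀ hη₁.le,
    ae_eventually_exists_notMem_ge (sub_pos.2 hκ₁) hρ <| isBigO_measureReal_exists_mem_fewNeighbors
      (M := M) hd hγ hb₀ hbη zero_le_two hκ] with ω hN hgood
  filter_upwards [hN, tendsto_natCast_atTop_atTop.eventually hgood,
    tendsto_natCast_atTop_atTop.eventually_ge_atTop (Real.exp 1)]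
    with n ⟨hN₁, hN₂⟩ ⟨x, hx, hnx, hxn⟩ hn
  have hn₀ : (0 : ℝ) < n := (Real.exp_pos 1).trans_le hn
  have hxn' : (1 - η) * x ≤ n := (le_inv_mul_iff₀ hη).1 hxn
  have hx₁ : 1 < x := (Real.one_lt_exp_iff.2 one_pos).trans_le (hn.trans hnx)
  have hfew : ⌈γ * b * Real.log x⌉₊ ≤ minDeg M n (rhat M γ n) ω := by
    rw [← M.scale_natCast]
    refine le_minDeg_of_forall_notMem_fewNeighbors (k := ⌊(1 - η) ^ 2 * x⌋₊) (m := ⌊2 * x⌋₊)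
      (M.scale_pos hγ hx₁) (M.scale_le_scale hγ hn hnx)
      ⟨Nat.floor_le_of_le (by nlinarith), Nat.le_floor (by nlinarith)⟩ ?_ ?_
    · exact_mod_cast (mul_pos hη hn₀).trans_le hN₁
    · exact fun i hi hfew => hx ⟨i, hi, hfew⟩
  calc γ * b * Real.log n ≤ γ * b * Real.log x := by gcongr
    _ ≤ ⌈γ * b * Real.log x⌉₊ := Nat.le_ceil _
    _ ≤ _ := by exact_mod_cast hfew

end Model

/-! ### The upper bound -/

lemma eventually_mul_mul_H_div_lt_one {γ b : ℝ} (hγ : 0 < γ) (h : H b < 1 / γ) :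
    ∀ᶠ c in nhds 1, γ * c * H (b / c) < 1 :=
  (continuousAt_mul_mul_H_div γ b).eventually_lt_const (by simpa using (lt_div_iff₀' hγ).1 h)

lemma isBigO_rpow_rpow {a b : ℝ} (h : a ≤ b) :
    (fun x : ℝ => x ^ a) =O[atTop] fun x => x ^ b := by
  refine .of_bound' ?_
  filter_upwards [eventually_ge_atTop 1] with x hx
  rw [Real.norm_of_nonneg (by positivity), Real.norm_of_nonneg (by positivity)]
  exact Real.rpow_le_rpow_of_exponent_le hx h

lemma isBigO_mul_rpow {f g : ℝ → ℝ} {a b e : ℝ} (hf : f =O[atTop] fun x => x ^ a)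
    (hg : g =O[atTop] fun x => x ^ b) (he : a + b ≤ e) :
    (fun x => f x * g x) =O[atTop] fun x => x ^ e := by
  refine ((hf.mul hg).congr' .rfl ?_).trans (isBigO_rpow_rpow he)
  filter_upwards [eventually_gt_atTop 0] with x hx using (Real.rpow_add hx a b).symm

lemma isBigO_exp_sub_one {ι : Type*} {l : Filter ι} {u v : ι → ℝ} (huv : u =O[l] v)
    (hv : Tendsto v l (nhds 0)) : (fun i => Real.exp (u i) - 1) =O[l] v := by
  have h := (Real.hasDerivAt_exp 0).isBigO_sub.comp_tendsto (huv.trans_tendsto hv)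
  simp only [Function.comp_def, Real.exp_zero, sub_zero] at h
  exact h.trans huv

lemma isTheta_natFloor_mul {c : ℝ} (hc : 0 < c) :
    (fun x : ℝ => (⌊c * x⌋₊ : ℝ)) =Θ[atTop] fun x => x ^ (1 : ℝ) := by
  simp only [Real.rpow_one]
  exact (Asymptotics.isTheta_of_div_tendsto_nhds_ne_zero
    (tendsto_nat_floor_mul_div_atTop hc.le) hc.ne').symm

namespace Model

variable (M : Model d P) {γ θ : ℝ}

lemma isBigO_connProb_scale (hd : d ≠ 0) (hγ : 0 < γ) (hθ : 0 < θ) :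
    (fun x => M.connProb (M.scale γ x)) =O[atTop] fun x => x ^ (θ - 1) := by
  have hlog : (fun x => x * M.connProb (M.scale γ x)) =O[atTop] fun x => x ^ θ :=
    (Asymptotics.isTheta_of_div_tendsto_nhds_ne_zero (M.tendsto_mul_connProb_scale_div_log hd hγ)
      hγ.ne').symm.trans_isBigO (isLittleO_log_rpow_atTop hθ).isBigO
  refine (isBigO_mul_rpow hlog (Asymptotics.isBigO_refl (fun x : ℝ => x ^ (-1 : ℝ)) _)
    le_rfl).congr' ?_ .rfl
  filter_upwards [eventually_gt_atTop 0] with x hx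
  rw [Real.rpow_neg_one]
  field_simp

lemma isBigO_scale_pow (hd : d ≠ 0) (hγ : 0 < γ) (hθ : 0 < θ) :
    (fun x => M.scale γ x ^ d) =O[atTop] fun x => x ^ (θ - 1) := by
  refine ((isBigO_mul_rpow (isLittleO_log_rpow_atTop hθ).isBigO (Asymptotics.isBigO_refl
    (fun x : ℝ => x ^ (-1 : ℝ)) _) le_rfl).const_mul_left (γ / M.α)).congr' ?_ .rfl
  filter_upwards [eventually_gt_atTop 1] with x hx
  rw [M.scale_pow hd hγ hx, Real.rpow_neg_one]
  ring

lemma isBigO_connFun_rpow (hd : d ≠ 0) :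
    (fun x : ℝ => M.connFun (x ^ (θ / d))) =O[atTop] fun x => x ^ (-θ) := by
  set v := volume.real (Metric.ball (0 : EuclideanSpace ℝ (Fin d)) 1)
  have hv : 0 < v :=
    ENNReal.toReal_pos (Metric.measure_ball_pos _ _ one_pos).ne' measure_ball_lt_top.ne
  refine .of_bound (M.α / v) ?_
  filter_upwards [eventually_gt_atTop 0] with x hx
  have h := M.connFun_mul_pow_le (D := x ^ (θ / d)) (by positivity)
  rw [← Real.rpow_mul_natCast hx.le, div_mul_cancel₀ _ (by positivity), ← mul_assoc] at h
  rw [Real.norm_of_nonneg (M.connFun_nonneg _), Real.norm_of_nonneg (by positivity),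
    Real.rpow_neg hx.le, ← div_eq_mul_inv, div_div, le_div_iff₀ (by positivity), mul_comm v]
  linarith

variable {b c κ : ℝ}

lemma eventually_rpow_le_binomialLowerTail (hd : d ≠ 0) (hγ : 0 < γ) (hb : 0 < b) (hc : 0 < c)
    (hκ : γ * c * H (b / c) < κ) : ∀ᶠ x in atTop, x ^ (-κ) ≤
      binomialLowerTail (⌊c * x⌋₊ - 1) (M.connProb (M.scale γ x)) ⌈γ * b * Real.log x⌉₊ := by
  rw [← mul_div_mul_left b c hγ.ne'] at hκ
  filter_upwards [eventually_gt_atTop 0, eventually_le_binomialLowerTail Real.tendsto_log_atTop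
    (M.tendsto_connProb_scale hd hγ) (M.tendsto_natFloor_mul_sub_one_mul_connProb_scale hd hγ hc)
    (mul_pos hγ hb) (mul_pos hγ hc) hκ] with x hx hle
  rwa [Real.rpow_def_of_pos hx, mul_neg, mul_comm]

lemma isBigO_inv_binomialLowerTail (hd : d ≠ 0) (hγ : 0 < γ) (hb : 0 < b) (hc : 0 < c)
    (hκ : γ * c * H (b / c) < κ) :
    (fun x => (binomialLowerTail (⌊c * x⌋₊ - 1) (M.connProb (M.scale γ x))
      ⌈γ * b * Real.log x⌉₊)⁻¹) =O[atTop] fun x => x ^ κ := by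
  refine .of_bound' ?_
  filter_upwards [M.eventually_rpow_le_binomialLowerTail hd hγ hb hc hκ,
    eventually_gt_atTop 0] with x hle hx
  have hpos : 0 < x ^ (-κ) := by positivity
  rw [norm_inv, Real.norm_of_nonneg (hpos.le.trans hle), Real.norm_of_nonneg (by positivity),
    ← inv_inv (x ^ κ), ← Real.rpow_neg hx.le]
  gcongr

lemma isBigO_exp_sub_one_connProb_scale (hd : d ≠ 0) (hγ : 0 < γ) (hc : 0 < c) (hθ₀ : 0 < θ)
    (hθ₁ : θ ≤ 1 / 2) :
    (fun x => Real.exp (8 * (⌊c * x⌋₊ * M.connProb (M.scale γ x)) * M.connFun (x ^ (2 * θ / d)) +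
      4 * M.connProb (M.scale γ x)) - 1) =O[atTop] fun x => x ^ (-θ) := by
  have hp := M.isBigO_connProb_scale hd hγ hθ₀
  have hmean : (fun x => ⌊c * x⌋₊ * M.connProb (M.scale γ x)) =O[atTop] fun x => x ^ θ :=
    isBigO_mul_rpow (isTheta_natFloor_mul hc).isBigO hp (by linarith)
  have hp' : (fun x => M.connProb (M.scale γ x)) =O[atTop] fun x => x ^ (-θ) :=
    hp.trans (isBigO_rpow_rpow (by linarith))
  refine isBigO_exp_sub_one ?_ (tendsto_rpow_neg_atTop hθ₀)
  have h := ((isBigO_mul_rpow hmean (M.isBigO_connFun_rpow (θ := 2 * θ) hd)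
    (e := -θ) (by linarith)).const_mul_left 8).add (hp'.const_mul_left 4)
  simpa only [mul_assoc] using h

lemma isBigO_pow_mul_scale_pow_mul_inv_binomialLowerTail (hd : d ≠ 0) (hγ : 0 < γ) (hb : 0 < b)
    (hc : 0 < c) (hκ : γ * c * H (b / c) < κ) (hθ₀ : 0 < θ) :
    (fun x => (x ^ (2 * θ / d)) ^ d * (M.scale γ x ^ d *
      (binomialLowerTail (⌊c * x⌋₊ - 1) (M.connProb (M.scale γ x)) ⌈γ * b * Real.log x⌉₊)⁻¹))
      =O[atTop] fun x => x ^ (3 * θ + κ - 1) := by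
  have hD : (fun x : ℝ => (x ^ (2 * θ / d)) ^ d) =O[atTop] fun x => x ^ (2 * θ) := by
    refine .of_bound' ?_
    filter_upwards [eventually_gt_atTop 0] with x hx
    rw [← Real.rpow_mul_natCast hx.le, div_mul_cancel₀ _ (by positivity)]
  exact isBigO_mul_rpow hD (isBigO_mul_rpow (M.isBigO_scale_pow hd hγ hθ₀)
    (M.isBigO_inv_binomialLowerTail hd hγ hb hc hκ) le_rfl) (by linarith)

variable {M} [IsProbabilityMeasure P]

lemma eventually_measureReal_forall_notMem_fewNeighbors_le (hd : d ≠ 0) (hγ : 0 < γ) {c' : ℝ}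
    (hc : 0 < c) (hcc' : c ≤ c') : ∀ᶠ x in atTop, ∀ (D : ℝ) (s : ℕ) (a : ℝ), 0 < D → 0 < a →
      binomialLowerTail (⌊c' * x⌋₊ - 1) (M.connProb (M.scale γ x)) s = a →
      P.real {ω | ∀ i ∈ Finset.Icc 1 ⌊c * x⌋₊, ω ∉ M.fewNeighbors (M.scale γ x) i
        ((Finset.Icc 1 ⌊c' * x⌋₊).erase i) s} ≤
      (⌊c * x⌋₊ : ℝ)⁻¹ * a⁻¹ +
      (Real.exp (8 * (⌊c' * x⌋₊ * M.connProb (M.scale γ x)) * M.connFun D +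
        4 * M.connProb (M.scale γ x)) - 1) +
      2 * (2 ^ d * volume.real (Metric.ball (0 : EuclideanSpace ℝ (Fin d)) 1)) *
        (D ^ d * (M.scale γ x ^ d * a⁻¹)) := by
  filter_upwards [eventually_gt_atTop 1, eventually_ge_atTop c⁻¹,
    (M.tendsto_connProb_scale hd hγ).eventually (Ioo_mem_nhdsGT one_half_pos)]
    with x hx hxc hp D s a hD ha has
  have hI : (Finset.Icc 1 ⌊c * x⌋₊).Nonempty :=
    Finset.nonempty_Icc.2 (Nat.floor_pos.2 ((inv_le_iff_one_le_mul₀' hc).1 hxc))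
  have h := measureReal_forall_notMem_fewNeighbors_le (M := M) (V := Finset.Icc 1 ⌊c' * x⌋₊)
    (s := s) (M.scale_pos hγ hx) hD hp.2.le (fun j hj => (Finset.mem_Icc.1 hj).1)
    (Finset.Icc_subset_Icc_right (by gcongr)) hI (by simpa [has] using ha)
  simp only [Nat.card_Icc, add_tsub_cancel_right, has] at h
  exact h.trans_eq (by simp only [mul_pow]; ring)

lemma isBigO_measureReal_forall_notMem_fewNeighbors (hd : d ≠ 0) (hγ : 0 < γ) (hb : 0 < b)
    {c' : ℝ} (hc : 0 < c) (hcc' : c ≤ c') (hκ₀ : 0 ≤ κ) (hκ₁ : κ < 1)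
    (hκ : γ * c' * H (b / c') < κ) :
    (fun x : ℝ => P.real {ω | ∀ i ∈ Finset.Icc 1 ⌊c * x⌋₊, ω ∉ M.fewNeighbors (M.scale γ x) i
      ((Finset.Icc 1 ⌊c' * x⌋₊).erase i) ⌈γ * b * Real.log x⌉₊}) =O[atTop]
        fun x => x ^ (-((1 - κ) / 4)) := by
  obtain ⟨θ, hθ⟩ : ∃ θ, θ = (1 - κ) / 4 := ⟨_, rfl⟩
  have hθ₀ : 0 < θ := by linarith
  have hc' := hc.trans_le hcc'
  have hfirst := isBigO_mul_rpow (e := -θ) (a := -1)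
    (by simpa [Real.rpow_neg_one] using (isTheta_natFloor_mul hc).inv.isBigO)
    (M.isBigO_inv_binomialLowerTail hd hγ hb hc' hκ) (by linarith)
  have hexp := M.isBigO_exp_sub_one_connProb_scale hd hγ hc' hθ₀ (by linarith)
  have hclose := (M.isBigO_pow_mul_scale_pow_mul_inv_binomialLowerTail hd hγ hb hc' hκ hθ₀).trans
    (isBigO_rpow_rpow (b := -θ) (by linarith))
  rw [← hθ]
  refine .trans (.of_bound' ?_) ((hfirst.add hexp).add (hclose.const_mul_left
    (2 * (2 ^ d * volume.real (Metric.ball (0 : EuclideanSpace ℝ (Fin d)) 1)))))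
  filter_upwards [eventually_measureReal_forall_notMem_fewNeighbors_le (M := M) hd hγ hc hcc',
    M.eventually_rpow_le_binomialLowerTail hd hγ hb hc' hκ, eventually_gt_atTop 0]
    with x hle htail hx
  rw [Real.norm_of_nonneg measureReal_nonneg]
  exact (hle _ _ _ (by positivity) ((Real.rpow_pos_of_pos hx _).trans_le htail) rfl).trans
    (Real.le_norm_self _)

lemma ae_eventually_minDeg_le (hd : d ≠ 0) (hγ : 0 < γ) (hb : 0 < b) (h : H b < 1 / γ) :
    ∀ᵐ ω ∂P, ∀ᶠ n : ℕ in atTop, minDeg M n (rhat M γ n) ω ≤ γ * b * Real.log n := by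
  have hsq : Tendsto (fun η : ℝ => (1 + η) ^ 2) (nhdsWithin 0 (Ioi 0)) (nhds 1) :=
    ((continuous_const.add continuous_id).pow 2).tendsto' _ _ (by simp) |>.mono_left
      nhdsWithin_le_nhds
  obtain ⟨η, hκ, hη₀, hη₁⟩ := ((hsq.eventually (eventually_mul_mul_H_div_lt_one hγ h)).and
    (Ioo_mem_nhdsGT one_pos)).exists
  obtain ⟨κ, hκ', hκ₁⟩ := exists_between (max_lt one_pos hκ)
  obtain ⟨hκ₀, hκ⟩ := max_lt_iff.1 hκ'
  have hη : 0 < 1 - η := sub_pos.2 hη₁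
  have hρ : 1 < 1 + η := by linarith
  filter_upwards [ae_eventually_poisson_mem_Icc M.hasLaw_N hη₀ hη₁.le,
    ae_eventually_exists_notMem_le (div_pos (sub_pos.2 hκ₁) four_pos) hρ <|
      isBigO_measureReal_forall_notMem_fewNeighbors (M := M) hd hγ hb hη (by nlinarith)
        hκ₀.le hκ₁ hκ] with ω hN hgood
  filter_upwards [hN, tendsto_natCast_atTop_atTop.eventually hgood,
    tendsto_natCast_atTop_atTop.eventually_ge_atTop ((1 + η) * Real.exp 1)]
    with n ⟨hN₁, hN₂⟩ ⟨x, hx, hxn, hnx⟩ hn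
  have hxe : Real.exp 1 ≤ x := le_of_mul_le_mul_left (hn.trans hnx) (by linarith)
  have hn₁ : (1 : ℝ) < n := (Real.one_lt_exp_iff.2 one_pos).trans_le (hxe.trans hxn)
  have hx₀ : 0 < x := (Real.exp_pos 1).trans_le hxe
  obtain ⟨i, hi, hfew⟩ : ∃ i ∈ Finset.Icc 1 ⌊(1 - η) * x⌋₊, ω ∈ M.fewNeighbors (M.scale γ x) i
      ((Finset.Icc 1 ⌊(1 + η) ^ 2 * x⌋₊).erase i) ⌈γ * b * Real.log x⌉₊ := by
    simpa [and_assoc] using hx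
  have hlt : minDeg M n (rhat M γ n) ω < ⌈γ * b * Real.log x⌉₊ := by
    rw [← M.scale_natCast]
    exact minDeg_lt_of_mem_fewNeighbors (M.scale_pos hγ hn₁) (M.scale_le_scale hγ hxe hxn)
      (Finset.Icc_subset_Icc_right (Nat.floor_le_of_le (by nlinarith)) hi)
      (Nat.le_floor (by nlinarith)) hfew
  exact (Nat.lt_ceil.1 hlt).le.trans (by gcongr)

end Model

/-! ### Convergence -/

lemma ae_tendsto_of_forall_ae_eventually {α ι : Type*} [TopologicalSpace α] [LinearOrder α]
    [OrderTopology α] [DenselyOrdered α] [TopologicalSpace.SeparableSpace α] {l : Filter ι}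
    {f : ι → Ω → α} {a : α} (hlow : ∀ b < a, ∀ᵐ ω ∂P, ∀ᶠ i in l, b ≤ f i ω)
    (hup : ∀ b > a, ∀ᵐ ω ∂P, ∀ᶠ i in l, f i ω ≤ b) :
    ∀ᵐ ω ∂P, Tendsto (fun i => f i ω) l (nhds a) := by
  obtain ⟨D, hDc, hD⟩ := TopologicalSpace.exists_countable_dense α
  have hlow' : ∀ᵐ ω ∂P, ∀ b ∈ D, b < a → ∀ᶠ i in l, b ≤ f i ω :=
    (ae_ball_iff hDc).2 fun b _ => eventually_imp_distrib_left.2 (hlow b)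
  have hup' : ∀ᵐ ω ∂P, ∀ b ∈ D, a < b → ∀ᶠ i in l, f i ω ≤ b :=
    (ae_ball_iff hDc).2 fun b _ => eventually_imp_distrib_left.2 (hup b)
  filter_upwards [hlow', hup'] with ω hω hω'
  refine tendsto_order.2 ⟨fun b hb => ?_, fun b hb => ?_⟩
  · obtain ⟨b', hb'D, hbb', hb'a⟩ := hD.exists_between hb
    exact (hω b' hb'D hb'a).mono fun i hi => hbb'.trans_le hi
  · obtain ⟨b', hb'D, hab', hb'b⟩ := hD.exists_between hb
    exact (hω' b' hb'D hab').mono fun i hi => hi.trans_lt hb'b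

lemma eventually_log_natCast_pos : ∀ᶠ n : ℕ in atTop, 0 < Real.log n :=
  (Real.tendsto_log_atTop.comp tendsto_natCast_atTop_atTop).eventually_gt_atTop 0

/-- For `γ ≤ 1` the limit is `0`, since then `H 0 = 1 ≤ 1 / γ`. -/
theorem minDeg_tendsto_general (hd : d ≠ 0) [IsProbabilityMeasure P] (M : Model d P) {γ : ℝ}
    (hγ : 0 < γ) :
    ∀ᵐ ω ∂P, Tendsto
      (fun n : ℕ => (minDeg M n (rhat M γ n) ω : ℝ) / Real.log n) atTop
        (nhds (γ * Hminusinv (1 / γ))) := by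
  have hy : 0 < 1 / γ := by positivity
  have hlt := Hminusinv_lt_one hy
  refine ae_tendsto_of_forall_ae_eventually (fun a ha => ?_) fun a ha => ?_
  · rcases le_or_gt a 0 with ha₀ | ha₀
    · exact .of_forall fun ω => eventually_log_natCast_pos.mono fun n hn =>
        ha₀.trans (by positivity)
    · have hb₀ := div_pos ha₀ hγ
      have hb := (div_lt_iff₀' hγ).2 ha
      filter_upwards [Model.ae_eventually_le_minDeg (M := M) hd hγ hb₀ (hb.trans hlt)
        (lt_H_of_lt_Hminusinv hb₀.le hb)] with ω hω
      filter_upwards [hω, eventually_log_natCast_pos] with n hn hlog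
      rwa [mul_div_cancel₀ _ hγ.ne', ← le_div_iff₀ hlog] at hn
  · obtain ⟨b, hβb, hb⟩ := exists_between (lt_min ((lt_div_iff₀' hγ).2 ha) hlt)
    obtain ⟨hba, hb₁⟩ := lt_min_iff.1 hb
    filter_upwards [Model.ae_eventually_minDeg_le (M := M) hd hγ ((Hminusinv_nonneg _).trans_lt hβb)
      (H_lt_of_Hminusinv_lt hb₁.le hy.le hβb)] with ω hω
    filter_upwards [hω, eventually_log_natCast_pos] with n hn hlog
    exact ((div_le_iff₀ hlog).2 hn).trans ((lt_div_iff₀' hγ).1 hba).le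

/-- Theorem 4(iii): for `γ > 1`, a.s. `δ_n/log n → γ H₋⁻¹(1/γ)`. -/
theorem minDeg_tendsto (hd : 2 ≤ d) [IsProbabilityMeasure P] (M : Model d P)
    {c : ℝ} (hc : 0 < c)
    (hg : M.g =o[atTop] fun r : ℝ => Real.exp (-(c * r)))
    {γ : ℝ} (hγ : 1 < γ) :
    ∀ᵐ ω ∂P, Tendsto
      (fun n : ℕ => (minDeg M n (rhat M γ n) ω : ℝ) / Real.log n) atTop
        (nhds (γ * Hminusinv (1 / γ))) :=
  minDeg_tendsto_general (by omega) M (by linarith)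

end RCM
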